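/- arXiv:1808.05191 — 7 statements merged into one kernel-verified Lean document; each statement's English description precedes it below -/
import Mathlib

section
/- Let d ≥ 1, let q, ε be real constants, P ∈ L¹(ℝ^d) and g, h ∈ L¹(ℝ^{2d}). Then, with m_g(X) = ∫_{ℝ^d} g(X,k) dk and m_h(X) = ∫_{ℝ^d} h(X,k) dk, one has ‖B[m_g, g] − B[m_h, h]‖_{L¹(ℝ^{2d})} ≤ 2|q| ( ‖P‖_{L¹(ℝ^d)} + |ε| ‖g‖_{L¹(ℝ^{2d})} + |ε| ‖h‖_{L¹(ℝ^{2d})} ) ‖g − h‖_{L¹(ℝ^{2d})}. -/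
open MeasureTheory Real Filter

noncomputable section

/-- The bilinear operator `B[m,f]` of the Alber–Fourier equation. -/
def Bop (d : ℕ) (q ε : ℝ) (P : (Fin d → ℝ) → ℂ) (m : (Fin d → ℝ) → ℂ)
    (f : ((Fin d → ℝ) × (Fin d → ℝ)) → ℂ) : ((Fin d → ℝ) × (Fin d → ℝ)) → ℂ :=
  fun z => Complex.I * q * (P (z.2 - (2⁻¹ : ℝ) • z.1) - P (z.2 + (2⁻¹ : ℝ) • z.1)) * m z.1
    + (ε : ℂ) * Complex.I * q *
        ∫ s : Fin d → ℝ,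
          m s * (f (z.1 - s, z.2 - (2⁻¹ : ℝ) • s) - f (z.1 - s, z.2 + (2⁻¹ : ℝ) • s))

section Shear

variable {E G : Type*} [MeasurableSpace E] [MeasurableSpace G] [AddGroup G] [MeasurableAdd₂ G]
  {μ : Measure E} {ν : Measure G} [SFinite μ] [SFinite ν] [ν.IsAddRightInvariant]

/-- The shear `(s, x) ↦ (s, x + w s)` preserves the product measure. -/
theorem measurePreserving_shear {w : E → G} (hw : Measurable w) :
    MeasurePreserving (fun p : E × G => (p.1, p.2 + w p.1)) (μ.prod ν) (μ.prod ν) :=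
  (MeasurePreserving.id μ).skew_product (g := fun s x => x + w s) (by fun_prop)
    (ae_of_all _ fun s => map_add_right_eq_self ν (w s))

theorem integrable_mul_shear {w : E → G} (hw : Measurable w) {m : E → ℂ} {f : G → ℂ}
    (hm : Integrable m μ) (hf : Integrable f ν) :
    Integrable (fun p : E × G => m p.1 * f (p.2 + w p.1)) (μ.prod ν) :=
  (measurePreserving_shear hw).integrable_comp_of_integrable (hm.mul_prod hf)

theorem integral_norm_mul_shear {w : E → G} (hw : Measurable w) {m : E → ℂ} {f : G → ℂ}
    (hm : Integrable m μ) (hf : Integrable f ν) :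
    ∫ p : E × G, ‖m p.1 * f (p.2 + w p.1)‖ ∂μ.prod ν = (∫ s, ‖m s‖ ∂μ) * ∫ x, ‖f x‖ ∂ν := by
  have hmp := measurePreserving_shear (μ := μ) (ν := ν) hw
  have hint : AEStronglyMeasurable (fun p : E × G => ‖m p.1 * f p.2‖)
      (Measure.map (fun p : E × G => (p.1, p.2 + w p.1)) (μ.prod ν)) := by
    rw [hmp.map_eq]
    exact (hm.mul_prod hf).norm.aestronglyMeasurable
  rw [← integral_map hmp.aemeasurable hint (f := fun p : E × G => ‖m p.1 * f p.2‖), hmp.map_eq]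
  simp_rw [norm_mul]
  exact integral_prod_mul (fun s => ‖m s‖) fun x => ‖f x‖

end Shear

section Marginal

variable {E F : Type*} [MeasurableSpace E] [MeasurableSpace F]
  {μ : Measure E} {ν : Measure F} [SFinite μ] [SFinite ν]

/-- Taking marginals is a contraction from `L¹(μ.prod ν)` to `L¹(μ)`. -/
theorem integral_norm_marginal_sub_le {g h : E × F → ℂ} (hg : Integrable g (μ.prod ν))
    (hh : Integrable h (μ.prod ν)) :
    ∫ x, ‖(∫ k, g (x, k) ∂ν) - ∫ k, h (x, k) ∂ν‖ ∂μ ≤ ∫ z, ‖g z - h z‖ ∂μ.prod ν := by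
  have hgh := (hg.sub hh).norm
  simp only [Pi.sub_apply] at hgh
  rw [integral_prod _ hgh]
  refine integral_mono_of_nonneg (ae_of_all _ fun x => norm_nonneg _) hgh.integral_prod_left ?_
  filter_upwards [hg.prod_right_ae, hh.prod_right_ae] with x hgx hhx
  rw [← integral_sub hgx hhx]
  exact norm_integral_le_integral_norm _

theorem integral_norm_marginal_le {h : E × F → ℂ} (hh : Integrable h (μ.prod ν)) :
    ∫ x, ‖∫ k, h (x, k) ∂ν‖ ∂μ ≤ ∫ z, ‖h z‖ ∂μ.prod ν := by
  simpa using integral_norm_marginal_sub_le hh (integrable_zero (E × F) ℂ (μ.prod ν))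

end Marginal

section Convolution

variable {E G : Type*} [MeasurableSpace E] [MeasurableSpace G] [AddGroup G] [MeasurableAdd₂ G]
  {μ : Measure E} {ν : Measure G} [SFinite μ] [SFinite ν] [ν.IsAddRightInvariant]

/-- An integrable majorant giving the `L¹` Lipschitz estimate for the bilinear map
`(m, f) ↦ ∫ s, m s * (f (· + v s) - f (· + w s))`. -/
theorem exists_integrable_bound_integral_mul_shear_sub {v w : E → G} (hv : Measurable v) (hw : Measurable w)
    {m n : E → ℂ} {g h : G → ℂ} (hm : Integrable m μ) (hn : Integrable n μ)
    (hg : Integrable g ν) (hh : Integrable h ν) :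
    ∃ K : G → ℝ, Integrable K ν ∧
      (∀ᵐ z ∂ν, ‖(∫ s, m s * (g (z + v s) - g (z + w s)) ∂μ)
          - ∫ s, n s * (h (z + v s) - h (z + w s)) ∂μ‖ ≤ K z) ∧
      ∫ z, K z ∂ν = 2 * ((∫ s, ‖m s - n s‖ ∂μ) * (∫ x, ‖g x‖ ∂ν)
        + (∫ s, ‖n s‖ ∂μ) * ∫ x, ‖g x - h x‖ ∂ν) := by
  have hmn : Integrable (fun s => m s - n s) μ := hm.sub hn
  have hgh : Integrable (fun x => g x - h x) ν := hg.sub hh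
  have i₁ := (integrable_mul_shear hv hmn hg).norm
  have i₂ := (integrable_mul_shear hw hmn hg).norm
  have i₃ := (integrable_mul_shear hv hn hgh).norm
  have i₄ := (integrable_mul_shear hw hn hgh).norm
  have hi := (i₁.add i₂).add (i₃.add i₄)
  refine ⟨_, hi.integral_prod_right, ?_, ?_⟩
  · filter_upwards [hi.prod_left_ae, (integrable_mul_shear hv hm hg).prod_left_ae,
      (integrable_mul_shear hw hm hg).prod_left_ae, (integrable_mul_shear hv hn hh).prod_left_ae,
      (integrable_mul_shear hw hn hh).prod_left_ae] with z hz a₁ a₂ b₁ b₂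
    have a := a₁.sub a₂
    have b := b₁.sub b₂
    simp only [Pi.sub_def, ← mul_sub] at a b
    rw [← integral_sub a b]
    refine norm_integral_le_of_norm_le hz (ae_of_all _ fun s => ?_)
    simp only [Pi.add_apply]
    calc _ = ‖((m s - n s) * g (z + v s) - (m s - n s) * g (z + w s))
          + (n s * (g (z + v s) - h (z + v s)) - n s * (g (z + w s) - h (z + w s)))‖ := by
          congr 1; ring
      _ ≤ _ := (norm_add_le _ _).trans (add_le_add (norm_sub_le _ _) (norm_sub_le _ _))
  · rw [← integral_prod_symm _ hi, integral_add' (i₁.add i₂) (i₃.add i₄), integral_add' i₁ i₂,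
      integral_add' i₃ i₄, integral_norm_mul_shear hv hmn hg, integral_norm_mul_shear hw hmn hg,
      integral_norm_mul_shear hv hn hgh, integral_norm_mul_shear hw hn hgh]
    ring

end Convolution

/-- Lipschitz estimate
`‖B[m_g,g] − B[m_h,h]‖_{L¹} ≤ 2|q| (‖P‖_{L¹} + |ε|‖g‖_{L¹} + |ε|‖h‖_{L¹}) ‖g−h‖_{L¹}`. -/
theorem stmt_3 (d : ℕ) (hd : 1 ≤ d) (q ε : ℝ) (P : (Fin d → ℝ) → ℂ) (hP : Integrable P)
    (g h : ((Fin d → ℝ) × (Fin d → ℝ)) → ℂ) (hg : Integrable g) (hh : Integrable h) :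
    (∫ z, ‖Bop d q ε P (fun X => ∫ k, g (X, k)) g z
            - Bop d q ε P (fun X => ∫ k, h (X, k)) h z‖) ≤
      2 * |q| * ((∫ x, ‖P x‖) + |ε| * (∫ z, ‖g z‖) + |ε| * (∫ z, ‖h z‖)) *
        (∫ z, ‖g z - h z‖) := by
  have hD := integral_norm_marginal_sub_le hg hh
  have hH := integral_norm_marginal_le hh
  rw [← Measure.volume_eq_prod] at hD hH
  have hm : Integrable (fun X => ∫ k, g (X, k)) := Integrable.integral_prod_left hg
  have hn : Integrable (fun X => ∫ k, h (X, k)) := Integrable.integral_prod_left hh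
  set m : (Fin d → ℝ) → ℂ := fun X => ∫ k, g (X, k)
  set n : (Fin d → ℝ) → ℂ := fun X => ∫ k, h (X, k)
  have hmn : Integrable (fun X => m X - n X) := hm.sub hn
  have : (volume : Measure ((Fin d → ℝ) × (Fin d → ℝ))).IsAddRightInvariant :=
    inferInstanceAs ((volume : Measure (Fin d → ℝ)).prod volume).IsAddRightInvariant
  obtain ⟨K, hK, hle, hKint⟩ := exists_integrable_bound_integral_mul_shear_sub
    (v := fun s : Fin d → ℝ => (-s, -((2⁻¹ : ℝ) • s))) (w := fun s => (-s, (2⁻¹ : ℝ) • s))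
    (by fun_prop) (by fun_prop) hm hn hg hh
  have hv : Measurable fun s : Fin d → ℝ => -((2⁻¹ : ℝ) • s) := by fun_prop
  have hw : Measurable fun s : Fin d → ℝ => (2⁻¹ : ℝ) • s := by fun_prop
  have i₁ := (integrable_mul_shear hv hmn hP).norm
  have i₂ := (integrable_mul_shear hw hmn hP).norm
  have e₁ := integral_norm_mul_shear hv hmn hP
  have e₂ := integral_norm_mul_shear hw hmn hP
  rw [← Measure.volume_eq_prod] at i₁ i₂ e₁ e₂
  have i := ((i₁.add i₂).const_mul |q|).add (hK.const_mul (|ε| * |q|))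
  refine (integral_mono_of_nonneg (ae_of_all _ fun z => norm_nonneg _) i ?_).trans ?_
  · filter_upwards [hle] with z hz
    have hv' (s : Fin d → ℝ) : z + (-s, -((2⁻¹ : ℝ) • s)) = (z.1 - s, z.2 - (2⁻¹ : ℝ) • s) := by
      ext <;> simp [sub_eq_add_neg]
    have hw' (s : Fin d → ℝ) : z + (-s, (2⁻¹ : ℝ) • s) = (z.1 - s, z.2 + (2⁻¹ : ℝ) • s) := by
      ext <;> simp [sub_eq_add_neg]
    simp only [hv', hw'] at hz
    simp only [Bop, Pi.add_apply, ← sub_eq_add_neg]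
    set I := ∫ s, m s * (g (z.1 - s, z.2 - (2⁻¹ : ℝ) • s) - g (z.1 - s, z.2 + (2⁻¹ : ℝ) • s))
    set J := ∫ s, n s * (h (z.1 - s, z.2 - (2⁻¹ : ℝ) • s) - h (z.1 - s, z.2 + (2⁻¹ : ℝ) • s))
    set p₁ := P (z.2 - (2⁻¹ : ℝ) • z.1)
    set p₂ := P (z.2 + (2⁻¹ : ℝ) • z.1)
    calc _ = ‖Complex.I * q * ((m z.1 - n z.1) * p₁ - (m z.1 - n z.1) * p₂)
          + ε * Complex.I * q * (I - J)‖ := by congr 1; ring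
      _ ≤ |q| * ‖(m z.1 - n z.1) * p₁ - (m z.1 - n z.1) * p₂‖ + |ε| * |q| * ‖I - J‖ := by
          refine (norm_add_le _ _).trans_eq ?_
          simp only [norm_mul, Complex.norm_I, Complex.norm_real, Real.norm_eq_abs, one_mul,
            mul_one]
      _ ≤ _ := by
          gcongr
          exact norm_sub_le _ _
  · rw [integral_add' ((i₁.add i₂).const_mul |q|) (hK.const_mul (|ε| * |q|)),
      integral_const_mul, integral_const_mul, integral_add' i₁ i₂, e₁, e₂, hKint]
    calc _ = 2 * |q| * ((∫ s, ‖m s - n s‖) * (∫ x, ‖P x‖)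
          + |ε| * ((∫ s, ‖m s - n s‖) * (∫ z, ‖g z‖)
            + (∫ s, ‖n s‖) * ∫ z, ‖g z - h z‖)) := by ring
      _ ≤ 2 * |q| * ((∫ z, ‖g z - h z‖) * (∫ x, ‖P x‖)
          + |ε| * ((∫ z, ‖g z - h z‖) * (∫ z, ‖g z‖)
            + (∫ z, ‖h z‖) * ∫ z, ‖g z - h z‖)) := by gcongr
      _ = _ := by ring

end
end

section
/- Let p ≠ 0 be real, D > 0, and let g : ℝ² → ℂ be measurable with |g(X,K)| ≤ D/(1 + X² + K²) for all X, K ∈ ℝ. Then there exists a constant C = C(p) > 0 such that for every X ∈ ℝ: sup over ω ∈ ℂ with Re ω > 0 of | X ∫_0^∞ e^{−ω t} g(X, 2πp t X) dt | ≤ C·D. -/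
open MeasureTheory Real Filter

noncomputable section

theorem integrable_inv_one_add_mul_sq {b : ℝ} (hb : b ≠ 0) :
    Integrable fun t : ℝ => (1 + (b * t) ^ 2)⁻¹ :=
  integrable_inv_one_add_sq.comp_mul_left' hb

theorem integral_inv_one_add_mul_sq (b : ℝ) :
    ∫ t : ℝ, (1 + (b * t) ^ 2)⁻¹ = |b|⁻¹ * π := by
  rw [Measure.integral_comp_mul_left (fun t : ℝ => (1 + t ^ 2)⁻¹) b,
    integral_univ_inv_one_add_sq, abs_inv, smul_eq_mul]

/-- The Laplace transform of a function dominated by `D / (1 + (b t)²)` is bounded by `D π / |b|`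
on the right half-plane. -/
theorem norm_laplace_le_of_norm_le {f : ℝ → ℂ} {b D : ℝ} (hb : b ≠ 0) (hD : 0 ≤ D)
    (hf : ∀ t, ‖f t‖ ≤ D * (1 + (b * t) ^ 2)⁻¹) {ω : ℂ} (hω : 0 ≤ ω.re) :
    ‖∫ t in Set.Ioi (0 : ℝ), Complex.exp (-ω * t) * f t‖ ≤ D * (|b|⁻¹ * π) := by
  have hint := (integrable_inv_one_add_mul_sq hb).const_mul D
  calc
    _ ≤ ∫ t in Set.Ioi (0 : ℝ), D * (1 + (b * t) ^ 2)⁻¹ := by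
      refine norm_integral_le_of_norm_le hint.integrableOn ?_
      filter_upwards [ae_restrict_mem measurableSet_Ioi] with t ht
      have hexp : ‖Complex.exp (-ω * t)‖ ≤ 1 := by
        rw [Complex.norm_exp, Real.exp_le_one_iff]
        simpa using mul_nonneg hω (le_of_lt ht)
      rw [norm_mul]
      exact (mul_le_of_le_one_left (norm_nonneg _) hexp).trans (hf t)
    _ ≤ ∫ t : ℝ, D * (1 + (b * t) ^ 2)⁻¹ :=
      setIntegral_le_integral hint (Eventually.of_forall fun t => by positivity)
    _ = D * (|b|⁻¹ * π) := by rw [integral_const_mul, integral_inv_one_add_mul_sq]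

/-- Uniform bound for `X ñ_f(X,ω)`: if `|g(X,K)| ≤ D/(1+X²+K²)` then the
Laplace transform in `t` of `t ↦ g(X, 2πp t X)` satisfies
`sup_{Re ω > 0} |X ∫_0^∞ e^{−ωt} g(X, 2πp t X) dt| ≤ C·D` with `C = C(p)`. -/
theorem stmt_7 (p : ℝ) (hp : p ≠ 0) :
    ∃ C > 0, ∀ D : ℝ, 0 < D → ∀ g : ℝ → ℝ → ℂ, Measurable (Function.uncurry g) →
      (∀ X K : ℝ, ‖g X K‖ ≤ D / (1 + X ^ 2 + K ^ 2)) →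
      ∀ X : ℝ, ∀ ω : ℂ, 0 < ω.re →
        ‖(X : ℂ) * ∫ t in Set.Ioi (0 : ℝ), Complex.exp (-ω * t) * g X (2 * π * p * t * X)‖ ≤
          C * D := by
  refine ⟨(2 * |p|)⁻¹, by positivity, fun D hD g _ hg X ω hω => ?_⟩
  rcases eq_or_ne X 0 with rfl | hX
  · simp only [Complex.ofReal_zero, zero_mul, norm_zero]
    positivity
  have hb : 2 * π * p * X ≠ 0 := by positivity
  have hdom (t : ℝ) :
      ‖g X (2 * π * p * t * X)‖ ≤ D * (1 + (2 * π * p * X * t) ^ 2)⁻¹ := by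
    refine (hg X _).trans ?_
    rw [div_eq_mul_inv, mul_right_comm (2 * π * p) t X]
    gcongr
    nlinarith [sq_nonneg X]
  rw [norm_mul, Complex.norm_real, Real.norm_eq_abs]
  calc
    _ ≤ |X| * (D * (|2 * π * p * X|⁻¹ * π)) := by
      gcongr
      exact norm_laplace_le_of_norm_le hb hD.le hdom hω.le
    _ = (2 * |p|)⁻¹ * D := by
      have hX' : |X| ≠ 0 := abs_ne_zero.mpr hX
      have hp' : |p| ≠ 0 := abs_ne_zero.mpr hp
      rw [abs_mul, abs_mul, abs_mul, abs_two, abs_of_pos pi_pos]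
      field_simp

end
end

section
/- Let θ and γ be real numbers with 0 < θ < 1/2, γ > 1 and 3θ + γ > 2. Then there exists a constant C = C(θ,γ) > 0 such that for every t > 0: ∫_0^∞ ∫_0^t ( 1 + x^{2θ} τ² + x^{2γ} )^{-1} dτ dx ≤ C. -/
open MeasureTheory Real Filter

/-- The integral of `(a² + b² τ²)⁻¹` over a bounded interval starting at `0`, evaluated by `arctan`
and bounded uniformly in the length of the interval. -/
theorem setIntegral_inv_sq_add_sq_mul_sq_le {a b t : ℝ} (ha : 0 < a) (hb : 0 < b) (ht : 0 ≤ t) :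
    ∫ τ in Set.Ioc (0 : ℝ) t, (a ^ 2 + b ^ 2 * τ ^ 2)⁻¹ ≤ π * (a * b)⁻¹ := by
  have hpos (τ : ℝ) : 0 < a ^ 2 + b ^ 2 * τ ^ 2 := by positivity
  have hderiv (τ : ℝ) : HasDerivAt (fun τ ↦ (a * b)⁻¹ * arctan (b / a * τ))
      ((a ^ 2 + b ^ 2 * τ ^ 2)⁻¹) τ := by
    refine ((((hasDerivAt_id' τ).const_mul (b / a)).arctan).const_mul (a * b)⁻¹).congr_deriv ?_
    field_simp
  have hcont : Continuous fun τ : ℝ ↦ (a ^ 2 + b ^ 2 * τ ^ 2)⁻¹ :=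
    Continuous.inv₀ (by fun_prop) fun τ ↦ (hpos τ).ne'
  rw [← intervalIntegral.integral_of_le ht,
    intervalIntegral.integral_eq_sub_of_hasDerivAt (fun τ _ ↦ hderiv τ)
      (hcont.intervalIntegrable 0 t)]
  have harctan : arctan (b / a * t) ≤ π := by
    linarith [arctan_lt_pi_div_two (b / a * t), pi_pos]
  rw [mul_zero, arctan_zero, mul_zero, sub_zero, mul_comm]
  gcongr

theorem rpow_two_mul_eq_sq {x : ℝ} (hx : 0 ≤ x) (s : ℝ) : x ^ (2 * s) = (x ^ s) ^ 2 := by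
  rw [mul_comm, rpow_mul hx, rpow_two]

/-- Dropping nonnegative terms of the denominator bounds the integral over `τ` of
`(1 + x^{2θ} τ² + x^{2γ})⁻¹` by that of `(a² + x^{2θ} τ²)⁻¹`. -/
theorem setIntegral_inv_one_add_le {θ γ a t x : ℝ} (ha : 0 < a) (ht : 0 ≤ t) (hx : 0 < x)
    (hax : a ^ 2 ≤ 1 + x ^ (2 * γ)) :
    ∫ τ in Set.Ioc (0 : ℝ) t, (1 + x ^ (2 * θ) * τ ^ 2 + x ^ (2 * γ))⁻¹
      ≤ π * (a * x ^ θ)⁻¹ := by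
  refine le_trans ?_ (setIntegral_inv_sq_add_sq_mul_sq_le ha (rpow_pos_of_pos hx θ) ht)
  refine integral_mono_of_nonneg (Eventually.of_forall fun τ ↦ by positivity) ?_
    (Eventually.of_forall fun τ ↦ ?_)
  · refine (Continuous.integrableOn_Icc ?_).mono_set Set.Ioc_subset_Icc_self
    exact Continuous.inv₀ (by fun_prop) fun τ ↦ by positivity
  · simp only [rpow_two_mul_eq_sq hx.le θ]
    exact inv_anti₀ (by positivity) (by linarith)

/-- For `0 < θ < 1/2`, `γ > 1` and `3θ + γ > 2`, the double integral
`∫_0^∞ ∫_0^t (1 + x^{2θ} τ² + x^{2γ})⁻¹ dτ dx` is bounded uniformly in `t > 0`. -/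
theorem stmt_14 (θ γ : ℝ) (hθ0 : 0 < θ) (hθ : θ < 1 / 2) (hγ : 1 < γ) (h2 : 2 < 3 * θ + γ) :
    ∃ C > 0, ∀ t : ℝ, 0 < t →
      (∫ x in Set.Ioi (0 : ℝ), ∫ τ in Set.Ioc (0 : ℝ) t,
          (1 + x ^ (2 * θ) * τ ^ 2 + x ^ (2 * γ))⁻¹) ≤ C := by
  set g : ℝ → ℝ := fun x ↦ (Set.Ioc (0 : ℝ) 1).indicator (fun x ↦ π * x ^ (-θ)) x +
    (Set.Ioi (1 : ℝ)).indicator (fun x ↦ π * x ^ (-(γ + θ))) x with hg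
  have hgint : Integrable g := by
    refine Integrable.add ?_ ?_
    · rw [integrable_indicator_iff measurableSet_Ioc,
        ← intervalIntegrable_iff_integrableOn_Ioc_of_le zero_le_one]
      exact (intervalIntegral.intervalIntegrable_rpow' (by linarith)).const_mul π
    · rw [integrable_indicator_iff measurableSet_Ioi]
      exact (integrableOn_Ioi_rpow_of_lt (by linarith) one_pos).const_mul π
  refine ⟨|∫ x in Set.Ioi (0 : ℝ), g x| + 1, by positivity, fun t ht ↦ ?_⟩
  suffices h : (∫ x in Set.Ioi (0 : ℝ), ∫ τ in Set.Ioc (0 : ℝ) t,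
      (1 + x ^ (2 * θ) * τ ^ 2 + x ^ (2 * γ))⁻¹) ≤ ∫ x in Set.Ioi (0 : ℝ), g x by
    linarith [le_abs_self (∫ x in Set.Ioi (0 : ℝ), g x)]
  refine integral_mono_of_nonneg ?_ hgint.integrableOn ?_
  · filter_upwards [ae_restrict_mem measurableSet_Ioi] with x (hx : 0 < x)
    exact integral_nonneg fun τ ↦ by positivity
  · filter_upwards [ae_restrict_mem measurableSet_Ioi] with x (hx : 0 < x)
    rcases le_or_gt x 1 with hx1 | hx1
    · have hxg : g x = π * (1 * x ^ θ)⁻¹ := by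
        simp [hg, Set.indicator, hx, hx1, rpow_neg hx.le]
      rw [hxg]
      exact setIntegral_inv_one_add_le one_pos ht.le hx
        (by rw [one_pow]; linarith [rpow_pos_of_pos hx (2 * γ)])
    · have hxg : g x = π * (x ^ γ * x ^ θ)⁻¹ := by
        simp only [hg, Set.indicator, Set.mem_Ioc, Set.mem_Ioi, hx1, hx1.not_ge, and_false,
          if_false, if_true, zero_add, rpow_neg hx.le, rpow_add hx]
      rw [hxg]
      refine setIntegral_inv_one_add_le (rpow_pos_of_pos hx γ) ht.le hx ?_
      linarith [rpow_two_mul_eq_sq hx.le γ]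
end

section
/- Let P ∈ S(ℝ) be compactly supported, let p, q ∈ ℝ, and fix X ∈ ℝ. Define h̃(X,ω) = q i ∫_ℝ ( P(k + X/2) − P(k − X/2) ) / ( ω − 4π² i p k X ) dk for Re ω > 0. Then lim_{ρ→∞} sup { |h̃(X,ω)| : ω ∈ ℂ, Re ω > 0, |ω| > ρ } = 0. -/
open MeasureTheory Real Filter

noncomputable section

/-- The Laplace transform `h̃(X,ω)` of the linearised Alber kernel:
`h̃(X,ω) = q i ∫ (P(k+X/2) − P(k−X/2))/(ω − 4π² i p k X) dk`. -/
def htilde (p q : ℝ) (P : ℝ → ℝ) (X : ℝ) (ω : ℂ) : ℂ :=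
  (q : ℂ) * Complex.I *
    ∫ k : ℝ, ((P (k + X / 2) - P (k - X / 2) : ℝ) : ℂ) /
      (ω - 4 * (π : ℂ) ^ 2 * Complex.I * p * k * X)

/-- Decay of `h̃(X,·)` at infinity in the right half-plane:
`lim_{ρ→∞} sup { |h̃(X,ω)| : Re ω > 0, |ω| > ρ } = 0`. -/
theorem stmt_15 (P : SchwartzMap ℝ ℝ) (hPc : HasCompactSupport ⇑P) (p q X : ℝ) :
    ∀ ε : ℝ, 0 < ε → ∃ ρ : ℝ, ∀ ω : ℂ, 0 < ω.re → ρ < ‖ω‖ →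
      ‖htilde p q (⇑P) X ω‖ < ε := by
  intro ε hε
  set D : ℝ → ℝ := fun k => P (k + X / 2) - P (k - X / 2) with hD
  have hDi : Integrable D :=
    (P.integrable.comp_add_right (X / 2)).sub (P.integrable.comp_sub_right (X / 2))
  obtain ⟨R, hR⟩ : ∃ R : ℝ, ∀ k, D k ≠ 0 → |k| ≤ R := by
    obtain ⟨R, hR⟩ := hPc.isCompact.isBounded.subset_closedBall 0
    have hP : ∀ x, P x ≠ 0 → |x| ≤ R := fun x hx => by
      simpa using hR (subset_tsupport _ hx)
    refine ⟨R + |X / 2|, fun k hk => ?_⟩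
    by_cases h : P (k + X / 2) = 0
    · have h' : P (k - X / 2) ≠ 0 := fun h' => hk (by simp [hD, h, h'])
      have := abs_add_le (k - X / 2) (X / 2)
      rw [sub_add_cancel] at this
      linarith [hP _ h']
    · have := abs_sub (k + X / 2) (X / 2)
      rw [add_sub_cancel_right] at this
      linarith [hP _ h]
  set c : ℝ := 4 * π ^ 2 * |p| * |X| with hc
  have hc0 : 0 ≤ c := by positivity
  set M : ℝ := ∫ k, |D k| with hM
  have hM0 : 0 ≤ M := integral_nonneg fun k => abs_nonneg _
  refine ⟨max (2 * (c * |R|)) (2 * |q| * M / ε), fun ω _ hω => ?_⟩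
  obtain ⟨hω₁, hω₂⟩ := max_lt_iff.1 hω
  have hω0 : 0 < ‖ω‖ := lt_of_le_of_lt (by positivity) hω₁
  have hint : ‖∫ k : ℝ, ((P (k + X / 2) - P (k - X / 2) : ℝ) : ℂ) /
      (ω - 4 * (π : ℂ) ^ 2 * Complex.I * p * k * X)‖ ≤ ∫ k, 2 / ‖ω‖ * |D k| := by
    refine norm_integral_le_of_norm_le (hDi.abs.const_mul _) (Eventually.of_forall fun k => ?_)
    change ‖((D k : ℝ) : ℂ) / _‖ ≤ _
    rw [norm_div, Complex.norm_real, Real.norm_eq_abs]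
    by_cases hk : D k = 0
    · simp [hk]
    have hkR : |k| ≤ |R| := (hR k hk).trans (le_abs_self R)
    have hnorm : ‖4 * (π : ℂ) ^ 2 * Complex.I * p * k * X‖ = c * |k| := by
      simp only [norm_mul, norm_pow, Complex.norm_real, Complex.norm_I, Real.norm_eq_abs,
        abs_of_pos pi_pos, hc, Complex.norm_ofNat]
      ring
    have hlow : ‖ω‖ / 2 ≤ ‖ω - 4 * (π : ℂ) ^ 2 * Complex.I * p * k * X‖ := by
      have := norm_sub_norm_le ω (4 * (π : ℂ) ^ 2 * Complex.I * p * k * X)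
      rw [hnorm] at this
      linarith [mul_le_mul_of_nonneg_left hkR hc0]
    calc |D k| / ‖ω - 4 * (π : ℂ) ^ 2 * Complex.I * p * k * X‖ ≤ |D k| / (‖ω‖ / 2) := by gcongr
      _ = 2 / ‖ω‖ * |D k| := by field_simp
  rw [integral_const_mul, ← hM] at hint
  rw [htilde, norm_mul, norm_mul, Complex.norm_real, Complex.norm_I, mul_one, Real.norm_eq_abs]
  calc _ ≤ |q| * (2 / ‖ω‖ * M) := by gcongr
    _ = 2 * |q| * M / ‖ω‖ := by ring
    _ < ε := by
      rw [div_lt_iff₀ hε] at hω₂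
      rw [div_lt_iff₀ hω0]
      linarith

end
end

section
/- Let f ∈ S(ℝ) (Schwartz class) be compactly supported with ∫_ℝ f(t) dt = 0. Then the Hilbert transform of f is integrable: ‖H[f]‖_{L¹(ℝ)} < ∞. -/
open MeasureTheory Real Filter

noncomputable section

/-- The Hilbert transform `H[u](x) = (1/π) p.v. ∫ u(t)/(x−t) dt`, defined as the limit as
`ε → 0⁺` of the truncated integrals `(1/π) ∫_{|x−t|>ε} u(t)/(x−t) dt`. -/
def hilbertR (u : ℝ → ℝ) (x : ℝ) : ℝ :=
  limUnder (nhdsWithin (0 : ℝ) (Set.Ioi 0))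
    (fun ε : ℝ => (1 / π) * ∫ t in {t : ℝ | ε < |x - t|}, u t / (x - t))

/-- Folding the truncated singular integral onto the half-line turns it into an integral of
symmetric difference quotients. -/
lemma setIntegral_div_sub_eq_integral_Ioi {f : ℝ → ℝ} (hf : Integrable f) (x : ℝ) {ε : ℝ}
    (hε : 0 < ε) :
    ∫ t in {t : ℝ | ε < |x - t|}, f t / (x - t) =
      ∫ s in Set.Ioi ε, (f (x - s) - f (x + s)) / s := by
  have hset : MeasurableSet {s : ℝ | ε < |s|} := measurableSet_lt (by fun_prop) (by fun_prop)
  have hset' : MeasurableSet {t : ℝ | ε < |x - t|} :=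
    measurableSet_lt (by fun_prop) (by fun_prop)
  have hsubst : ∫ t in {t : ℝ | ε < |x - t|}, f t / (x - t) =
      ∫ s in {s : ℝ | ε < |s|}, f (x - s) / s := by
    rw [← integral_indicator hset, ← integral_indicator hset',
      ← integral_sub_left_eq_self _ volume x]
    refine integral_congr_ae (.of_forall fun t => ?_)
    simp [Set.indicator_apply]
  have hunion : {s : ℝ | ε < |s|} = Set.Ioi ε ∪ Set.Iio (-ε) := by
    ext s
    simp only [Set.mem_ofPred_eq, Set.mem_union, Set.mem_Ioi, Set.mem_Iio, lt_abs]
    exact or_congr_right lt_neg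
  have hquot : ∀ g : ℝ → ℝ, Integrable g →
      IntegrableOn (fun s => g s / s) {s : ℝ | ε < |s|} := by
    intro g hg
    have : IntegrableOn (fun s => s⁻¹ * g s) {s : ℝ | ε < |s|} := by
      refine hg.integrableOn.bdd_mul (c := ε⁻¹) (by fun_prop) ?_
      filter_upwards [ae_restrict_mem hset] with s hs
      rw [norm_inv]
      exact inv_anti₀ hε (le_of_lt hs)
    simpa only [div_eq_inv_mul] using this
  have hsub : Set.Ioi ε ⊆ {s : ℝ | ε < |s|} := hunion ▸ Set.subset_union_left
  have hminus := hquot _ (hf.comp_sub_left x)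
  have hplus := hquot _ (hf.comp_add_left x)
  have hdisj : Disjoint (Set.Ioi ε) (Set.Iio (-ε)) := by
    rw [Set.disjoint_left]
    intro s hs hs'
    simp only [Set.mem_Ioi, Set.mem_Iio] at hs hs'
    linarith
  have hneg : ∫ s in Set.Iio (-ε), f (x - s) / s = -∫ s in Set.Ioi ε, f (x + s) / s := by
    rw [← integral_Iic_eq_integral_Iio, ← integral_comp_neg_Ioi, ← integral_neg]
    simp [div_neg]
  rw [hsubst, hunion, setIntegral_union hdisj measurableSet_Iio (hminus.mono_set hsub)
    (hminus.mono_set (hunion ▸ Set.subset_union_right)), hneg, ← sub_eq_add_neg,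
    ← integral_sub (hminus.mono_set hsub) (hplus.mono_set hsub)]
  simp only [sub_div]

/-- The symmetric difference quotients of a Lipschitz function supported in `[-R, R]` are bounded
and vanish outside a bounded interval. -/
lemma norm_symm_diff_quotient_le {f : ℝ → ℝ} {C : NNReal} (hf : LipschitzWith C f) {R : ℝ}
    (hR : ∀ t, R < |t| → f t = 0) (x : ℝ) {s : ℝ} (hs : 0 < s) :
    ‖(f (x - s) - f (x + s)) / s‖ ≤
      (Set.Ioc 0 (R + |x|)).indicator (fun _ => 2 * (C : ℝ)) s := by
  by_cases h : s ≤ R + |x|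
  · rw [Set.indicator_of_mem (Set.mem_Ioc.2 ⟨hs, h⟩), norm_div, Real.norm_of_nonneg hs.le, div_le_iff₀ hs]
    refine (hf.norm_sub_le _ _).trans_eq ?_
    rw [show x - s - (x + s) = -(2 * s) by ring, norm_neg, Real.norm_of_nonneg (by positivity)]
    ring
  · have h1 : f (x - s) = 0 := hR _ (by
      have := abs_sub_abs_le_abs_sub s x
      rw [abs_of_pos hs, abs_sub_comm] at this
      linarith)
    have h2 : f (x + s) = 0 := hR _ (by
      have := abs_sub_abs_le_abs_sub s (-x)
      rw [abs_of_pos hs, abs_neg, sub_neg_eq_add, add_comm s x] at this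
      linarith)
    rw [h1, h2, Set.indicator_of_notMem fun h' => h h'.2]
    simp

lemma integrableOn_symm_diff_quotient {f : ℝ → ℝ} {C : NNReal} (hf : LipschitzWith C f) {R : ℝ}
    (hR : ∀ t, R < |t| → f t = 0) (x : ℝ) :
    IntegrableOn (fun s => (f (x - s) - f (x + s)) / s) (Set.Ioi 0) := by
  have hfm : Measurable f := hf.continuous.measurable
  have hbound : Integrable ((Set.Ioc 0 (R + |x|)).indicator fun _ => 2 * (C : ℝ)) :=
    (integrable_indicator_iff measurableSet_Ioc).2 (integrableOn_const (by simp))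
  refine hbound.integrableOn.mono' (Measurable.aestronglyMeasurable (by fun_prop)) ?_
  filter_upwards [ae_restrict_mem measurableSet_Ioi] with s hs
  exact norm_symm_diff_quotient_le hf hR x hs

lemma norm_integral_symm_diff_quotient_le {f : ℝ → ℝ} {C : NNReal} (hf : LipschitzWith C f)
    {R : ℝ} (hR0 : 0 ≤ R) (hR : ∀ t, R < |t| → f t = 0) (x : ℝ) :
    ‖∫ s in Set.Ioi 0, (f (x - s) - f (x + s)) / s‖ ≤ (R + |x|) * (2 * C) := by
  have hbound : Integrable ((Set.Ioc 0 (R + |x|)).indicator fun _ => 2 * (C : ℝ)) :=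
    (integrable_indicator_iff measurableSet_Ioc).2 (integrableOn_const (by simp))
  have hle := norm_integral_le_of_norm_le hbound.integrableOn (μ := volume.restrict (Set.Ioi 0))
    (f := fun s => (f (x - s) - f (x + s)) / s) (by
      filter_upwards [ae_restrict_mem measurableSet_Ioi] with s hs
      exact norm_symm_diff_quotient_le hf hR x hs)
  refine hle.trans_eq ?_
  have hnonneg : 0 ≤ R + |x| := by positivity
  rw [setIntegral_indicator measurableSet_Ioc,
    Set.inter_eq_right.2 Set.Ioc_subset_Ioi_self]
  simp [hnonneg]

/-- The principal value integral of a compactly supported Lipschitz function exists. -/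
lemma tendsto_truncated_integral_div_sub {f : ℝ → ℝ} {C : NNReal} (hf : LipschitzWith C f)
    (hint : Integrable f) {R : ℝ} (hR : ∀ t, R < |t| → f t = 0) (x : ℝ) :
    Tendsto (fun ε : ℝ => ∫ t in {t : ℝ | ε < |x - t|}, f t / (x - t))
      (nhdsWithin (0 : ℝ) (Set.Ioi 0))
      (nhds (∫ s in Set.Ioi 0, (f (x - s) - f (x + s)) / s)) := by
  have hlim : Tendsto (fun ε : ℝ => ε) (nhdsWithin (0 : ℝ) (Set.Ioi 0)) (nhds 0) :=
    tendsto_nhdsWithin_of_tendsto_nhds tendsto_id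
  have hcover := (aecover_Ioi_of_Ioi (μ := volume) hlim).integral_tendsto_of_countably_generated
    (integrableOn_symm_diff_quotient hf hR x)
  refine hcover.congr' ?_
  filter_upwards [self_mem_nhdsWithin] with ε hε
  rw [setIntegral_div_sub_eq_integral_Ioi hint x hε, Measure.restrict_restrict measurableSet_Ioi,
    Set.inter_eq_left.2 (Set.Ioi_subset_Ioi (le_of_lt hε))]

/-- Away from the support, cancellation gives the principal value quadratic decay. -/
lemma norm_principal_value_le {f : ℝ → ℝ} {C : NNReal} (hf : LipschitzWith C f)
    (hint : Integrable f) (hzero : ∫ t, f t = 0) {R : ℝ} (hR0 : 0 < R)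
    (hR : ∀ t, R < |t| → f t = 0) {x : ℝ} (hx : 2 * R < |x|) :
    ‖∫ s in Set.Ioi 0, (f (x - s) - f (x + s)) / s‖ ≤ (∫ t, ‖f t‖) * (2 * R) / x ^ 2 := by
  have hx0 : 0 < |x| := by linarith
  have hfar : ∀ t, |t| ≤ R → |x| / 2 ≤ |x - t| := fun t ht => by
    have := abs_sub_abs_le_abs_sub x t
    linarith
  have hnear : ∀ t, ‖f t / (x - t) - f t * x⁻¹‖ ≤ ‖f t‖ * (2 * R / x ^ 2) := by
    intro t
    rcases lt_or_ge R |t| with ht | ht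
    · simp [hR t ht]
    have hxt := hfar t ht
    have hxt0 : 0 < |x - t| := by linarith
    have hne : x - t ≠ 0 := abs_pos.1 hxt0
    have hxne : x ≠ 0 := abs_pos.1 hx0
    have heq : f t / (x - t) - f t * x⁻¹ = f t * (t / ((x - t) * x)) := by
      field_simp
      ring
    rw [heq, norm_mul]
    gcongr
    rw [norm_div, norm_mul, Real.norm_eq_abs, Real.norm_eq_abs, Real.norm_eq_abs, ← sq_abs x,
      div_le_div_iff₀ (by positivity) (by positivity)]
    calc |t| * |x| ^ 2 ≤ R * |x| ^ 2 := by gcongr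
      _ = 2 * R * (|x| / 2 * |x|) := by ring
      _ ≤ 2 * R * (|x - t| * |x|) := by gcongr
  have hquot : Integrable fun t => f t / (x - t) := by
    have hdiff : Integrable fun t => f t / (x - t) - f t * x⁻¹ :=
      (hint.norm.mul_const (2 * R / x ^ 2)).mono'
        (by have := hf.continuous.measurable; fun_prop) (.of_forall hnear)
    refine (hdiff.add (hint.mul_const x⁻¹)).congr (.of_forall fun t => ?_)
    simp
  have hbound : ‖∫ t, f t / (x - t)‖ ≤ (∫ t, ‖f t‖) * (2 * R) / x ^ 2 := by
    have hle := norm_integral_le_of_norm_le (hint.norm.mul_const (2 * R / x ^ 2))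
      (.of_forall hnear)
    rw [integral_sub hquot (hint.mul_const _), integral_mul_const, integral_mul_const, hzero,
      zero_mul, sub_zero] at hle
    rwa [mul_div_assoc]
  refine le_of_tendsto (tendsto_truncated_integral_div_sub hf hint hR x).norm ?_
  filter_upwards [mem_nhdsWithin_of_mem_nhds (Iio_mem_nhds hR0)] with ε hε
  rw [setIntegral_eq_integral_of_forall_compl_eq_zero]
  · exact hbound
  · intro t ht
    rw [hR t, zero_div]
    by_contra! h
    have := hfar t h
    simp only [Set.mem_ofPred_eq, not_lt] at ht
    simp only [Set.mem_Iio] at hε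
    linarith

lemma integrable_principal_value {f : ℝ → ℝ} {C : NNReal} (hf : LipschitzWith C f)
    (hint : Integrable f) (hzero : ∫ t, f t = 0) {R : ℝ} (hR1 : 1 ≤ R)
    (hR : ∀ t, R < |t| → f t = 0) :
    Integrable fun x => ∫ s in Set.Ioi 0, (f (x - s) - f (x + s)) / s := by
  have hfm : Measurable f := hf.continuous.measurable
  have hmeas : StronglyMeasurable fun p : ℝ × ℝ => (f (p.1 - p.2) - f (p.1 + p.2)) / p.2 :=
    Measurable.stronglyMeasurable (by fun_prop)
  set A : ℝ := 3 * R * (2 * C) with hA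
  set B : ℝ := (∫ t, ‖f t‖) * (2 * R)
  have hA0 : 0 ≤ A := by positivity
  have hB0 : 0 ≤ B := mul_nonneg (integral_nonneg fun t => norm_nonneg _) (by linarith)
  refine (integrable_inv_one_add_sq.const_mul (A * (1 + 4 * R ^ 2) + B * 2)).mono'
    hmeas.integral_prod_right'.aestronglyMeasurable (.of_forall fun x => ?_)
  rw [← div_eq_mul_inv, le_div_iff₀ (by positivity)]
  rcases lt_or_ge (2 * R) |x| with hx | hx
  · have hx1 : 1 ≤ x ^ 2 := by
      rw [← sq_abs]
      nlinarith
    have h := norm_principal_value_le hf hint hzero (by linarith) hR hx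
    calc _ ≤ B / x ^ 2 * (x ^ 2 + x ^ 2) := by gcongr
      _ = B * 2 := by
        have : x ^ 2 ≠ 0 := by linarith
        rw [← two_mul, mul_left_comm, div_mul_cancel₀ _ this, mul_comm]
      _ ≤ _ := le_add_of_nonneg_left (by positivity)
  · have hx2 : x ^ 2 ≤ 4 * R ^ 2 := by
      rw [← sq_abs]
      nlinarith [abs_nonneg x]
    have h : _ ≤ A := (norm_integral_symm_diff_quotient_le hf (by linarith) hR x).trans (by
      rw [hA]
      gcongr
      linarith)
    calc _ ≤ A * (1 + 4 * R ^ 2) := by gcongr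
      _ ≤ _ := le_add_of_nonneg_right (by positivity)

/-- Conditional integrability of the Hilbert transform: if `f` is a compactly
supported Schwartz function with `∫ f = 0`, then the principal-value limits defining `H[f]`
exist and `H[f] ∈ L¹(ℝ)`. -/
theorem stmt_16 (f : SchwartzMap ℝ ℝ) (hfc : HasCompactSupport ⇑f)
    (hint : (∫ t : ℝ, f t) = 0) :
    (∀ x : ℝ, ∃ L : ℝ,
      Tendsto (fun ε : ℝ => (1 / π) * ∫ t in {t : ℝ | ε < |x - t|}, f t / (x - t))
        (nhdsWithin (0 : ℝ) (Set.Ioi 0)) (nhds L)) ∧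
    Integrable (hilbertR ⇑f) := by
  obtain ⟨C, hC⟩ := (f.smooth 1).lipschitzWith_of_hasCompactSupport hfc one_ne_zero
  obtain ⟨r, hr⟩ := hfc.isCompact.isBounded.subset_closedBall (0 : ℝ)
  have hR : ∀ t, max r 1 < |t| → f t = 0 := fun t ht => by
    by_contra h
    have hmem := hr (subset_tsupport _ h)
    rw [mem_closedBall_zero_iff, Real.norm_eq_abs] at hmem
    linarith [le_max_left r 1]
  have hlim := fun x =>
    (tendsto_truncated_integral_div_sub hC f.integrable hR x).const_mul (1 / π)
  refine ⟨fun x => ⟨_, hlim x⟩, ?_⟩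
  rw [show hilbertR ⇑f = _ from funext fun x => (hlim x).limUnder_eq]
  exact (integrable_principal_value hC f.integrable hint (le_max_right r 1) hR).const_mul _

end
end

section
/- Let P ∈ S(ℝ) be compactly supported and let p ≠ 0 and q ≠ 0 be real. Define h̃(X,ω) = q i ∫_ℝ ( P(k + X/2) − P(k − X/2) ) / ( ω − 4π² i p k X ) dk for X ∈ ℝ, Re ω > 0. Then inf { |1 − h̃(X,ω)| : X ∈ ℝ, Re ω > 0 } = 0 if and only if at least one of the following holds: (i) there exist X* ∈ ℝ and Ω* ∈ ℂ∖ℝ such that H[D_{X*}P](Ω*) = H[D_{X*}P](conj(Ω*)) = 4πp/q; or (ii) there exist X*, Ω* ∈ ℝ such that H[D_{X*}P](Ω*) = 4πp/q and D_{X*}P(Ω*) = 0. -/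
open MeasureTheory Real Filter

noncomputable section

/-- The finite difference quotient `D_X P(k) = (P(k+X/2) − P(k−X/2))/X`, with `D_0 P = P'`. -/
def DXP (P : ℝ → ℝ) (X k : ℝ) : ℝ :=
  if X = 0 then deriv P k else (P (k + X / 2) - P (k - X / 2)) / X

/-- The Hilbert transform at a non-real complex point: `H[u](z) = (1/π) ∫ u(t)/(z−t) dt`. -/
def hilbertC (u : ℝ → ℝ) (z : ℂ) : ℂ :=
  (1 / (π : ℂ)) * ∫ t : ℝ, (u t : ℂ) / (z - t)

/-- The real part of the Cauchy integral `∫ u(t)/(x + iy − t) dt`, written so that it makes sense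
up to the boundary `y = 0`. -/
def cauchyRe (u : ℝ → ℝ) (x y : ℝ) : ℝ :=
  ∫ s in Set.Ioi (0 : ℝ), (u (x - s) - u (x + s)) * (s / (s ^ 2 + y ^ 2))

/-- Minus the imaginary part of the Cauchy integral `∫ u(t)/(x + iy − t) dt`, written so that it
makes sense up to the boundary `y = 0`. -/
def cauchyIm (u : ℝ → ℝ) (x y : ℝ) : ℝ :=
  ∫ r : ℝ, u (x - y * r) * (1 + r ^ 2)⁻¹

theorem abs_symm_kernel_le {u : ℝ → ℝ} {L : ℝ} (hL : ∀ a b, |u a - u b| ≤ L * |a - b|)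
    (x y : ℝ) {s : ℝ} (hs : 0 < s) :
    |(u (x - s) - u (x + s)) * (s / (s ^ 2 + y ^ 2))| ≤ 2 * L := by
  have h1 := hL (x - s) (x + s)
  have h2 : |x - s - (x + s)| = 2 * s := by
    rw [show x - s - (x + s) = -(2 * s) by ring, abs_neg, abs_of_pos (by positivity)]
  rw [h2] at h1
  have hL0 : 0 ≤ L * (2 * s) := (abs_nonneg _).trans h1
  have h3 : 0 < s ^ 2 + y ^ 2 := by positivity
  rw [abs_mul, abs_of_nonneg (by positivity : 0 ≤ s / (s ^ 2 + y ^ 2)), ← mul_div_assoc,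
    div_le_iff₀ h3]
  have hL1 : 0 ≤ L := by
    by_contra! h
    nlinarith
  nlinarith [mul_le_mul_of_nonneg_right h1 hs.le, mul_nonneg hL1 (sq_nonneg y)]

theorem symm_kernel_eq_zero {u : ℝ → ℝ} {R : ℝ} (hR : ∀ k, R < |k| → u k = 0)
    {x s : ℝ} (hs : |x| + R < s) : u (x - s) - u (x + s) = 0 := by
  rw [hR, hR, sub_zero]
  · have := le_abs_self (x + s)
    have := neg_abs_le x
    linarith
  · have := neg_le_abs (x - s)
    have := le_abs_self x
    linarith

theorem abs_symm_kernel_le_indicator {u : ℝ → ℝ} {L R : ℝ}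
    (hL : ∀ a b, |u a - u b| ≤ L * |a - b|) (hR : ∀ k, R < |k| → u k = 0)
    {x y s S : ℝ} (hS : |x| + R ≤ S) (hs : 0 < s) :
    |(u (x - s) - u (x + s)) * (s / (s ^ 2 + y ^ 2))| ≤
      (Set.Iic S).indicator (fun _ => 2 * L) s := by
  by_cases h : s ≤ S
  · rw [Set.indicator_of_mem (by exact h)]
    exact abs_symm_kernel_le hL x y hs
  · rw [Set.indicator_of_notMem (by exact h),
      symm_kernel_eq_zero hR (hS.trans_lt (not_le.mp h))]
    simp

theorem integrableOn_indicator_Iic_const (S c : ℝ) :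
    IntegrableOn ((Set.Iic S).indicator fun _ => c) (Set.Ioi 0) := by
  rw [IntegrableOn, integrable_indicator_iff measurableSet_Iic, IntegrableOn,
    Measure.restrict_restrict measurableSet_Iic]
  refine integrableOn_const (s := Set.Iic S ∩ Set.Ioi 0) ?_
  rw [Set.inter_comm, Set.Ioi_inter_Iic]
  exact measure_Ioc_lt_top.ne

theorem continuous_cauchyRe {X : Type*} [TopologicalSpace X] [FirstCountableTopology X]
    {u : X → ℝ → ℝ} (hu : Continuous (Function.uncurry u)) {L : ℝ}
    (hL : ∀ X a b, |u X a - u X b| ≤ L * |a - b|) {R : X → ℝ} (hRc : Continuous R)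
    (hR : ∀ X k, R X < |k| → u X k = 0) :
    Continuous fun v : X × ℝ × ℝ => cauchyRe (u v.1) v.2.1 v.2.2 := by
  rw [continuous_iff_continuousAt]
  rintro ⟨X₀, x₀, y₀⟩
  have hev : ∀ᶠ v : X × ℝ × ℝ in nhds (X₀, x₀, y₀), |v.2.1| + R v.1 < |x₀| + R X₀ + 1 := by
    have hc : Continuous fun v : X × ℝ × ℝ => |v.2.1| + R v.1 := by fun_prop
    exact hc.continuousAt.eventually_lt continuousAt_const (by simp)
  refine continuousAt_of_dominated
    (bound := (Set.Iic (|x₀| + R X₀ + 1)).indicator fun _ => 2 * L) ?_ ?_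
    (integrableOn_indicator_Iic_const _ _) ?_
  · refine Eventually.of_forall fun v => AEStronglyMeasurable.mul ?_ ?_
    · exact Continuous.aestronglyMeasurable (by fun_prop)
    · exact Measurable.aestronglyMeasurable (by fun_prop)
  · filter_upwards [hev] with v hv
    filter_upwards [ae_restrict_mem measurableSet_Ioi] with s hs
    exact abs_symm_kernel_le_indicator (hL _) (hR _) hv.le hs
  · filter_upwards [ae_restrict_mem measurableSet_Ioi] with s hs
    refine Continuous.continuousAt (Continuous.mul ?_ ?_)
    · fun_prop
    · have hs : 0 < s := hs
      refine continuous_const.div (by fun_prop) fun v => ?_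
      positivity

theorem continuous_cauchyIm {X : Type*} [TopologicalSpace X] [FirstCountableTopology X]
    {u : X → ℝ → ℝ} (hu : Continuous (Function.uncurry u)) {M : ℝ} (hM : ∀ X k, |u X k| ≤ M) :
    Continuous fun v : X × ℝ × ℝ => cauchyIm (u v.1) v.2.1 v.2.2 := by
  refine continuous_of_dominated (bound := fun r => M * (1 + r ^ 2)⁻¹) ?_ ?_
    (integrable_inv_one_add_sq.const_mul M) ?_
  · refine fun v => AEStronglyMeasurable.mul ?_ ?_
    · exact Continuous.aestronglyMeasurable (by fun_prop)
    · exact Measurable.aestronglyMeasurable (by fun_prop)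
  · refine fun v => Eventually.of_forall fun r => ?_
    rw [Real.norm_eq_abs, abs_mul, abs_of_nonneg (by positivity : 0 ≤ (1 + r ^ 2)⁻¹)]
    exact mul_le_mul_of_nonneg_right (hM _ _) (by positivity)
  · refine Eventually.of_forall fun r => Continuous.mul ?_ continuous_const
    fun_prop

theorem cauchyIm_zero (u : ℝ → ℝ) (x : ℝ) : cauchyIm u x 0 = π * u x := by
  simp [cauchyIm, integral_const_mul, mul_comm]

theorem integral_eq_integral_Ioi_add_comp_neg {g : ℝ → ℝ} (hg : Integrable g) :
    ∫ s, g s = ∫ s in Set.Ioi (0 : ℝ), (g s + g (-s)) := by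
  rw [integral_add hg.integrableOn hg.comp_neg.integrableOn, integral_comp_neg_Ioi, neg_zero,
    add_comm, ← Set.compl_Iic, integral_add_compl measurableSet_Iic hg]

theorem abs_cauchyIm_le {u : ℝ → ℝ} {M : ℝ} (hM : ∀ k, |u k| ≤ M) (x y : ℝ) :
    |cauchyIm u x y| ≤ M * π := by
  rw [← integral_univ_inv_one_add_sq, ← integral_const_mul, ← Real.norm_eq_abs]
  refine norm_integral_le_of_norm_le (integrable_inv_one_add_sq.const_mul M)
    (Eventually.of_forall fun r => ?_)
  rw [Real.norm_eq_abs, abs_mul, abs_of_nonneg (by positivity : 0 ≤ (1 + r ^ 2)⁻¹)]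
  exact mul_le_mul_of_nonneg_right (hM _) (by positivity)

theorem abs_cauchyRe_le {u : ℝ → ℝ} {L : ℝ} (hL : ∀ a b, |u a - u b| ≤ L * |a - b|)
    (hi : Integrable u) (x y : ℝ) :
    |cauchyRe u x y| ≤ 2 * L + 2 * ∫ t, |u t| := by
  have h1 : Integrable fun s => |u (x - s)| := (hi.comp_sub_left x).abs
  have h2 : Integrable fun s => |u (x + s)| := (hi.comp_add_left x).abs
  have h3 := integrableOn_indicator_Iic_const 1 (2 * L)
  have key : |cauchyRe u x y| ≤ ∫ s in Set.Ioi (0 : ℝ),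
      ((Set.Iic 1).indicator (fun _ => 2 * L) s + (|u (x - s)| + |u (x + s)|)) := by
    rw [← Real.norm_eq_abs]
    refine norm_integral_le_of_norm_le (h3.add (h1.add h2).integrableOn) ?_
    filter_upwards [ae_restrict_mem measurableSet_Ioi] with s hs
    have hs : 0 < s := hs
    by_cases h : s ≤ 1
    · rw [Set.indicator_of_mem (by exact h), Real.norm_eq_abs]
      have := abs_symm_kernel_le hL x y hs
      have := abs_nonneg (u (x - s))
      have := abs_nonneg (u (x + s))
      linarith
    · rw [Set.indicator_of_notMem (by exact h), Real.norm_eq_abs, zero_add, abs_mul]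
      have h4 : |s / (s ^ 2 + y ^ 2)| ≤ 1 := by
        rw [abs_of_nonneg (by positivity), div_le_one (by positivity)]
        nlinarith [sq_nonneg y]
      calc _ ≤ |u (x - s) - u (x + s)| * 1 := by gcongr
        _ ≤ _ := by rw [mul_one]; exact abs_sub _ _
  have h4 : Integrable fun s => |u (x - s)| + |u (x + s)| := h1.add h2
  rw [integral_add h3 h4.integrableOn] at key
  have e1 : ∫ s in Set.Ioi (0 : ℝ), (Set.Iic 1).indicator (fun _ => 2 * L) s = 2 * L := by
    rw [setIntegral_indicator measurableSet_Iic, Set.Ioi_inter_Iic]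
    simp
  have e2 : ∫ s in Set.Ioi (0 : ℝ), (|u (x - s)| + |u (x + s)|) ≤ 2 * ∫ t, |u t| := by
    refine (setIntegral_le_integral h4
      (Eventually.of_forall fun s => by simp only [Pi.zero_apply]; positivity)).trans ?_
    rw [integral_add h1 h2, integral_sub_left_eq_self (fun t => |u t|) volume x,
      integral_add_left_eq_self (fun t => |u t|) x]
    linarith
  linarith

theorem cauchy_integral_eq {u : ℝ → ℝ} (hu : Continuous u) (hc : HasCompactSupport u)
    (x : ℝ) {y : ℝ} (hy : 0 < y) :
    ∫ t : ℝ, (u t : ℂ) / ((⟨x, y⟩ : ℂ) - t) = ⟨cauchyRe u x y, -cauchyIm u x y⟩ := by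
  have hpos : ∀ s : ℝ, 0 < s ^ 2 + y ^ 2 := fun s => by positivity
  have hi : Integrable fun s => u (x - s) := (hu.integrable_of_hasCompactSupport hc).comp_sub_left x
  have hcs : HasCompactSupport fun s => u (x - s) :=
    hc.comp_homeomorph (Homeomorph.subLeft x)
  have h1 : Integrable fun s => u (x - s) * (s / (s ^ 2 + y ^ 2)) := by
    refine Continuous.integrable_of_hasCompactSupport ?_ hcs.mul_right
    exact (by fun_prop : Continuous fun s => u (x - s)).mul
      (continuous_id.div (by fun_prop) fun s => (hpos s).ne')
  have h2 : Integrable fun s => u (x - s) * (y / (s ^ 2 + y ^ 2)) := by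
    refine Continuous.integrable_of_hasCompactSupport ?_ hcs.mul_right
    exact (by fun_prop : Continuous fun s => u (x - s)).mul
      (continuous_const.div (by fun_prop) fun s => (hpos s).ne')
  have e1 : ∫ s, u (x - s) * (s / (s ^ 2 + y ^ 2)) = cauchyRe u x y := by
    rw [integral_eq_integral_Ioi_add_comp_neg h1, cauchyRe]
    refine setIntegral_congr_fun measurableSet_Ioi fun s _ => ?_
    simp only [sub_neg_eq_add, neg_sq]
    ring
  have e2 : ∫ s, u (x - s) * (y / (s ^ 2 + y ^ 2)) = cauchyIm u x y := by
    have h := Measure.integral_comp_mul_left (fun s => u (x - s) * (y / (s ^ 2 + y ^ 2))) y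
    rw [abs_of_pos (inv_pos.mpr hy), smul_eq_mul, eq_inv_mul_iff_mul_eq₀ hy.ne',
      ← integral_const_mul] at h
    rw [← h, cauchyIm]
    congr 1 with r
    have : 1 + r ^ 2 ≠ 0 := by positivity
    have := (hpos (y * r)).ne'
    field_simp
    ring
  rw [← integral_sub_left_eq_self _ volume x]
  have key : ∀ s : ℝ, (u (x - s) : ℂ) / ((⟨x, y⟩ : ℂ) - ((x - s : ℝ) : ℂ)) =
      ((u (x - s) * (s / (s ^ 2 + y ^ 2)) : ℝ) : ℂ) -
        Complex.I * ((u (x - s) * (y / (s ^ 2 + y ^ 2)) : ℝ) : ℂ) := by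
    intro s
    have hz : (⟨x, y⟩ : ℂ) - ((x - s : ℝ) : ℂ) = s + y * Complex.I := by
      apply Complex.ext <;> simp
    have hne : (s : ℂ) + y * Complex.I ≠ 0 := by
      intro h
      have := congrArg Complex.im h
      simp at this
      exact hy.ne' this
    have hne2 : (s : ℂ) ^ 2 + (y : ℂ) ^ 2 ≠ 0 := by exact_mod_cast (hpos s).ne'
    rw [hz]
    push_cast
    field_simp
    linear_combination (u (x - s) : ℂ) * (y : ℂ) ^ 2 * Complex.I_sq
  simp_rw [key]
  rw [integral_sub h1.ofReal (h2.ofReal.const_mul _), integral_const_mul, integral_complex_ofReal,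
    integral_complex_ofReal, e1, e2]
  apply Complex.ext <;> simp

theorem hilbertR_eq_cauchyRe {u : ℝ → ℝ} (hu : Continuous u) (hc : HasCompactSupport u) {L R : ℝ}
    (hL : ∀ a b, |u a - u b| ≤ L * |a - b|) (hR : ∀ k, R < |k| → u k = 0) (x : ℝ) :
    hilbertR u x = (1 / π) * cauchyRe u x 0 := by
  have hi : Integrable fun s => u (x - s) := (hu.integrable_of_hasCompactSupport hc).comp_sub_left x
  refine Tendsto.limUnder_eq (Tendsto.const_mul _ ?_)
  have trunc : ∀ ε : ℝ, 0 < ε → ∫ t in {t : ℝ | ε < |x - t|}, u t / (x - t) =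
      ∫ s in Set.Ioi (0 : ℝ), (Set.Ioi ε).indicator
        (fun s => (u (x - s) - u (x + s)) * (s / (s ^ 2 + 0 ^ 2))) s := by
    intro ε hε
    have hm : MeasurableSet {s : ℝ | ε < |s|} :=
      measurableSet_lt measurable_const (by fun_prop)
    have hm' : MeasurableSet {t : ℝ | ε < |x - t|} :=
      measurableSet_lt measurable_const (by fun_prop)
    have hg : Integrable ({s : ℝ | ε < |s|}.indicator fun s => u (x - s) / s) := by
      rw [integrable_indicator_iff hm]
      refine Integrable.mono' (hi.abs.const_mul ε⁻¹).integrableOn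
        (Measurable.aestronglyMeasurable (by fun_prop)) ?_
      filter_upwards [ae_restrict_mem hm] with s hs
      have hs : ε < |s| := hs
      rw [Real.norm_eq_abs, abs_div, div_eq_inv_mul]
      gcongr
    have e0 : ∫ t in {t : ℝ | ε < |x - t|}, u t / (x - t) =
        ∫ s, {s : ℝ | ε < |s|}.indicator (fun s => u (x - s) / s) s := by
      rw [← integral_indicator hm', ← integral_sub_left_eq_self _ volume x]
      congr 1 with s
      simp [Set.indicator_apply]
    rw [e0, integral_eq_integral_Ioi_add_comp_neg hg]
    refine setIntegral_congr_fun measurableSet_Ioi fun s hs => ?_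
    have hs : 0 < s := hs
    by_cases h : ε < s
    · simp only [Set.indicator_apply, Set.mem_ofPred_eq, abs_neg, abs_of_pos hs, h, if_true,
        Set.mem_Ioi, sub_neg_eq_add]
      field_simp
      ring
    · simp [abs_of_pos hs, h]
  have hlim : Tendsto (fun ε : ℝ => ∫ s in Set.Ioi (0 : ℝ), (Set.Ioi ε).indicator
        (fun s => (u (x - s) - u (x + s)) * (s / (s ^ 2 + 0 ^ 2))) s)
      (nhdsWithin 0 (Set.Ioi 0)) (nhds (cauchyRe u x 0)) := by
    refine tendsto_integral_filter_of_dominated_convergence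
      ((Set.Iic (|x| + R)).indicator fun _ => 2 * L) ?_ ?_
      (integrableOn_indicator_Iic_const _ _) ?_
    · refine Eventually.of_forall fun ε => Measurable.aestronglyMeasurable ?_
      exact Measurable.indicator (by fun_prop) measurableSet_Ioi
    · refine Eventually.of_forall fun ε => ?_
      filter_upwards [ae_restrict_mem measurableSet_Ioi] with s hs
      exact (norm_indicator_le_norm_self _ _).trans
        (abs_symm_kernel_le_indicator hL hR le_rfl hs)
    · filter_upwards [ae_restrict_mem measurableSet_Ioi] with s hs
      refine tendsto_const_nhds.congr' ?_
      filter_upwards [nhdsWithin_le_nhds (Iio_mem_nhds (show (0 : ℝ) < s from hs))] with ε hε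
      rw [Set.indicator_of_mem (by exact hε)]
  refine hlim.congr' ?_
  filter_upwards [self_mem_nhdsWithin] with ε hε
  exact (trunc ε hε).symm

theorem DXP_eq_integral {P : ℝ → ℝ} (hP : ContDiff ℝ 1 P) (X k : ℝ) :
    DXP P X k = ∫ τ in (0 : ℝ)..1, deriv P (k + X * (τ - 1 / 2)) := by
  by_cases hX : X = 0
  · simp [DXP, hX]
  have hd : ∀ τ : ℝ, HasDerivAt (fun τ : ℝ => P (k + X * (τ - 1 / 2)) / X)
      (deriv P (k + X * (τ - 1 / 2))) τ := by
    intro τ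
    have h1 : HasDerivAt (fun τ : ℝ => k + X * (τ - 1 / 2)) X τ := by
      simpa only [id, mul_one] using (((hasDerivAt_id τ).sub_const (1 / 2)).const_mul X).const_add k
    have h2 := ((hP.differentiable (by simp) (k + X * (τ - 1 / 2))).hasDerivAt.comp τ h1).div_const X
    rwa [mul_div_cancel_right₀ _ hX] at h2
  rw [intervalIntegral.integral_eq_sub_of_hasDerivAt (fun τ _ => hd τ)]
  · rw [DXP, if_neg hX, ← sub_div]
    ring_nf
  · have := hP.continuous_deriv le_rfl
    exact Continuous.intervalIntegrable (by fun_prop) _ _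

theorem continuous_DXP {P : ℝ → ℝ} (hP : ContDiff ℝ 1 P) :
    Continuous (Function.uncurry (DXP P)) := by
  have h := hP.continuous_deriv le_rfl
  have : Function.uncurry (DXP P) =
      fun v : ℝ × ℝ => ∫ τ in (0 : ℝ)..1, deriv P (v.2 + v.1 * (τ - 1 / 2)) :=
    funext fun v => DXP_eq_integral hP v.1 v.2
  rw [this]
  exact intervalIntegral.continuous_parametric_intervalIntegral_of_continuous' (by fun_prop) _ _

theorem abs_DXP_le {P : ℝ → ℝ} (hP : ContDiff ℝ 1 P) {M : ℝ} (hM : ∀ k, |deriv P k| ≤ M)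
    (X k : ℝ) : |DXP P X k| ≤ M := by
  rw [DXP_eq_integral hP, ← Real.norm_eq_abs]
  simpa using intervalIntegral.norm_integral_le_of_norm_le_const (a := 0) (b := 1)
    (f := fun τ : ℝ => deriv P (k + X * (τ - 1 / 2))) fun τ _ => hM _

theorem abs_DXP_sub_le {P : ℝ → ℝ} (hP : ContDiff ℝ 1 P) {L : ℝ}
    (hL : ∀ a b, |deriv P a - deriv P b| ≤ L * |a - b|) (X a b : ℝ) :
    |DXP P X a - DXP P X b| ≤ L * |a - b| := by
  have hc := hP.continuous_deriv le_rfl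
  rw [DXP_eq_integral hP, DXP_eq_integral hP, ← intervalIntegral.integral_sub
    (Continuous.intervalIntegrable (by fun_prop) _ _)
    (Continuous.intervalIntegrable (by fun_prop) _ _), ← Real.norm_eq_abs]
  have := intervalIntegral.norm_integral_le_of_norm_le_const (a := 0) (b := 1)
    (C := L * |a - b|)
    (f := fun τ : ℝ => deriv P (a + X * (τ - 1 / 2)) - deriv P (b + X * (τ - 1 / 2)))
    fun τ _ => by simpa using hL (a + X * (τ - 1 / 2)) (b + X * (τ - 1 / 2))
  simpa using this

theorem DXP_eq_zero {P : ℝ → ℝ} {R : ℝ} (hR : ∀ k, R < |k| → P k = 0) (X k : ℝ)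
    (hk : R + |X| / 2 < |k|) : DXP P X k = 0 := by
  by_cases hX : X = 0
  · rw [DXP, if_pos hX]
    have : P =ᶠ[nhds k] fun _ => 0 := by
      filter_upwards [continuous_abs.continuousAt.eventually_const_lt
        (show R < |k| by simpa [hX] using hk)] with a ha using hR a ha
    rw [this.deriv_eq, deriv_const]
  · have h2 : |X / 2| = |X| / 2 := by rw [abs_div, abs_two]
    have h3 : |k| ≤ |k + X / 2| + |X / 2| := by simpa using abs_sub (k + X / 2) (X / 2)
    have h4 : |k| ≤ |k - X / 2| + |X / 2| := by simpa using abs_add_le (k - X / 2) (X / 2)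
    rw [DXP, if_neg hX, hR, hR, sub_zero, zero_div] <;> linarith

theorem DXP_neg (P : ℝ → ℝ) (X : ℝ) : DXP P (-X) = DXP P X := by
  ext k
  by_cases hX : X = 0
  · simp [hX]
  · rw [DXP, DXP, if_neg (neg_ne_zero.mpr hX), if_neg hX, neg_div, sub_neg_eq_add,
      ← sub_eq_add_neg, div_neg, ← neg_div, neg_sub]

theorem hasCompactSupport_of_abs_lt {u : ℝ → ℝ} {R : ℝ} (hR : ∀ k, R < |k| → u k = 0) :
    HasCompactSupport u :=
  HasCompactSupport.intro (isCompact_Icc (a := -R) (b := R)) fun k hk =>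
    hR k (not_le.mp fun h => hk (abs_le.mp h))

theorem hilbertC_conj (u : ℝ → ℝ) (z : ℂ) :
    hilbertC u (starRingEnd ℂ z) = starRingEnd ℂ (hilbertC u z) := by
  rw [hilbertC, hilbertC, map_mul, ← integral_conj]
  simp

theorem htilde_eq_hilbertC {p q X : ℝ} (hp : p ≠ 0) (hX : X ≠ 0) (P : ℝ → ℝ) (z : ℂ) :
    htilde p q P X (4 * (π : ℂ) ^ 2 * Complex.I * p * X * z) =
      (q / (4 * π * p) : ℂ) * hilbertC (DXP P X) z := by
  have hp' : (p : ℂ) ≠ 0 := by exact_mod_cast hp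
  have hX' : (X : ℂ) ≠ 0 := by exact_mod_cast hX
  have hπ : (π : ℂ) ≠ 0 := by exact_mod_cast pi_ne_zero
  have key : ∀ k : ℝ, ((P (k + X / 2) - P (k - X / 2) : ℝ) : ℂ) /
      (4 * (π : ℂ) ^ 2 * Complex.I * p * X * z - 4 * (π : ℂ) ^ 2 * Complex.I * p * k * X) =
      (1 / (4 * (π : ℂ) ^ 2 * Complex.I * p)) * ((DXP P X k : ℂ) / (z - k)) := by
    intro k
    rw [DXP, if_neg hX, show 4 * (π : ℂ) ^ 2 * Complex.I * p * X * z -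
      4 * (π : ℂ) ^ 2 * Complex.I * p * k * X = 4 * (π : ℂ) ^ 2 * Complex.I * p * (X * (z - k)) by
        ring, div_mul_div_comm, Complex.ofReal_div, one_mul, div_div, mul_left_comm]
  rw [htilde, hilbertC]
  simp_rw [key]
  rw [integral_const_mul]
  have hI := Complex.I_ne_zero
  field_simp

theorem exists_norm_cauchy_integral_le {u : ℝ → ℝ} (hu : Continuous u) (hc : HasCompactSupport u)
    {L : ℝ} (hL : ∀ a b, |u a - u b| ≤ L * |a - b|) :
    ∃ C, ∀ z : ℂ, 0 < z.im → ‖∫ t : ℝ, (u t : ℂ) / (z - t)‖ ≤ C := by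
  obtain ⟨M, hM⟩ := hu.bounded_above_of_compact_support hc
  refine ⟨(2 * L + 2 * ∫ t, |u t|) + M * π, fun z hz => ?_⟩
  have h := cauchy_integral_eq hu hc z.re hz
  rw [Complex.eta] at h
  rw [h]
  refine (Complex.norm_le_abs_re_add_abs_im _).trans (add_le_add ?_ ?_)
  · exact abs_cauchyRe_le hL (hu.integrable_of_hasCompactSupport hc) _ _
  · simpa using abs_cauchyIm_le hM z.re z.im

theorem integral_DXP_div {P : ℝ → ℝ} (hu : Continuous P) (hc : HasCompactSupport P) {X : ℝ}
    (hX : X ≠ 0) {z : ℂ} (hz : 0 < z.im) :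
    ∫ t : ℝ, (DXP P X t : ℂ) / (z - t) = (1 / X : ℂ) *
      ((∫ t : ℝ, (P t : ℂ) / (z + X / 2 - t)) - ∫ t : ℝ, (P t : ℂ) / (z - X / 2 - t)) := by
  have hi : ∀ w : ℂ, 0 < w.im → Integrable fun t : ℝ => (P t : ℂ) / (w - t) := by
    intro w hw
    refine Continuous.integrable_of_hasCompactSupport ?_ ?_
    · refine (by fun_prop : Continuous fun t : ℝ => (P t : ℂ)).div (by fun_prop) fun t h => ?_
      have := congrArg Complex.im h
      simp at this
      exact hw.ne' this
    · simp_rw [div_eq_mul_inv]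
      exact (hc.comp_left (g := fun x : ℝ => (x : ℂ)) Complex.ofReal_zero).mul_right
  have h1 := hi (z + X / 2) (by simpa using hz)
  have h2 := hi (z - X / 2) (by simpa using hz)
  rw [← integral_add_right_eq_self (fun t : ℝ => (P t : ℂ) / (z + X / 2 - t)) (X / 2),
    ← integral_sub_right_eq_self (fun t : ℝ => (P t : ℂ) / (z - X / 2 - t)) (X / 2),
    ← integral_sub (h1.comp_add_right (X / 2)) (h2.comp_sub_right (X / 2)), ← integral_const_mul]
  congr 1 with t
  rw [DXP, if_neg hX]
  push_cast
  rw [show z + X / 2 - (t + X / 2) = z - t by ring, show z - X / 2 - (t - X / 2) = z - t by ring]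
  ring

theorem norm_cauchy_integral_le_of_lt_norm {u : ℝ → ℝ} {M R : ℝ} (hM : ∀ k, |u k| ≤ M)
    (hR : ∀ k, R < |k| → u k = 0) {z : ℂ} (hz : R < ‖z‖) :
    ‖∫ t : ℝ, (u t : ℂ) / (z - t)‖ ≤ M / (‖z‖ - R) * volume.real (Set.Icc (-R) R) := by
  have h0 : ∫ t : ℝ, (u t : ℂ) / (z - t) = ∫ t in Set.Icc (-R) R, (u t : ℂ) / (z - t) := by
    refine (setIntegral_eq_integral_of_forall_compl_eq_zero fun t ht => ?_).symm
    rw [hR t (not_le.mp fun h => ht (abs_le.mp h))]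
    simp
  rw [h0]
  refine norm_setIntegral_le_of_norm_le_const measure_Icc_lt_top fun t ht => ?_
  have ht : |t| ≤ R := abs_le.mpr ht
  have h1 : ‖z‖ - R ≤ ‖z - t‖ := by
    have := norm_sub_norm_le z (t : ℂ)
    rw [Complex.norm_real, Real.norm_eq_abs] at this
    linarith
  rw [norm_div, Complex.norm_real, Real.norm_eq_abs]
  have := hM t
  have : 0 < ‖z‖ - R := by linarith
  have : 0 ≤ M := (abs_nonneg _).trans (hM t)
  gcongr

theorem exists_bound_of_le_norm_cauchy_integral {P : ℝ → ℝ} (hP : ContDiff ℝ 1 P) {R : ℝ}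
    (hR : ∀ k, R < |k| → P k = 0) {δ : ℝ} (hδ : 0 < δ) :
    ∃ K, ∀ (X : ℝ) (z : ℂ), 0 < z.im → δ ≤ ‖∫ t : ℝ, (DXP P X t : ℂ) / (z - t)‖ →
      |X| ≤ K ∧ ‖z‖ ≤ K := by
  have hc := hasCompactSupport_of_abs_lt hR
  obtain ⟨L, hL⟩ := ContDiff.lipschitzWith_of_hasCompactSupport hc hP one_ne_zero
  obtain ⟨M, hM⟩ := (hP.continuous_deriv le_rfl).bounded_above_of_compact_support hc.deriv
  obtain ⟨C, hC⟩ := exists_norm_cauchy_integral_le hP.continuous hc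
    (fun a b => by simpa [Real.dist_eq] using hL.dist_le_mul a b)
  have hC0 : 0 ≤ C := (norm_nonneg _).trans (hC Complex.I (by simp))
  have hM0 : 0 ≤ M := (norm_nonneg _).trans (hM 0)
  set K₁ := 2 * C / δ with hK₁
  have hK₁0 : 0 ≤ K₁ := by positivity
  set R' := R + K₁ / 2 with hR'
  set V := volume.real (Set.Icc (-R') R') with hV
  have hV0 : 0 ≤ V := measureReal_nonneg
  have hX : ∀ (X : ℝ) (z : ℂ), 0 < z.im → δ ≤ ‖∫ t : ℝ, (DXP P X t : ℂ) / (z - t)‖ →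
      |X| ≤ K₁ := by
    intro X z hz h
    by_cases hX : X = 0
    · simpa [hX] using hK₁0
    rw [integral_DXP_div hP.continuous hc hX hz, norm_mul, norm_div, norm_one, Complex.norm_real,
      Real.norm_eq_abs, one_div_mul_eq_div, le_div_iff₀ (abs_pos.mpr hX)] at h
    rw [hK₁, le_div_iff₀ hδ]
    have h1 := hC (z + X / 2) (by simpa using hz)
    have h2 := hC (z - X / 2) (by simpa using hz)
    have h3 := norm_sub_le (∫ t : ℝ, (P t : ℂ) / (z + X / 2 - t))
      (∫ t : ℝ, (P t : ℂ) / (z - X / 2 - t))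
    linarith
  refine ⟨max K₁ (max R' (R' + M * V / δ)), fun X z hz h => ⟨(hX X z hz h).trans
    (le_max_left _ _), le_max_of_le_right ?_⟩⟩
  by_contra! hlt
  obtain ⟨hlt1, hlt2⟩ := max_lt_iff.mp hlt
  have hle := norm_cauchy_integral_le_of_lt_norm (abs_DXP_le hP hM X)
    (fun k hk => DXP_eq_zero hR X k (lt_of_le_of_lt (by linarith [hX X z hz h]) hk)) hlt1
  have hpos : 0 < ‖z‖ - R' := by linarith
  have h1 := h.trans hle
  rw [div_mul_eq_mul_div, le_div_iff₀ hpos] at h1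
  have h2 : M * V / δ < ‖z‖ - R' := by linarith
  rw [div_lt_iff₀ hδ] at h2
  linarith

theorem one_sub_htilde_eq {p q X : ℝ} (hp : p ≠ 0) (hq : q ≠ 0) (hX : X ≠ 0) (P : ℝ → ℝ) (z : ℂ) :
    1 - htilde p q P X (4 * (π : ℂ) ^ 2 * Complex.I * p * X * z) =
      ((q / (4 * π * p) : ℝ) : ℂ) *
        (((4 * π * p / q : ℝ) : ℂ) - hilbertC (DXP P X) z) := by
  have hp' : (p : ℂ) ≠ 0 := by exact_mod_cast hp
  have hq' : (q : ℂ) ≠ 0 := by exact_mod_cast hq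
  have hπ : (π : ℂ) ≠ 0 := by exact_mod_cast pi_ne_zero
  rw [htilde_eq_hilbertC hp hX]
  push_cast
  field_simp

/-- The infimum of `|1 - h̃|` vanishes iff `H[D_X P]` takes values arbitrarily close to `4πp/q` in
the upper half-plane, for nonzero `X`. -/
theorem inf_one_sub_htilde_iff {p q : ℝ} (hp : p ≠ 0) (hq : q ≠ 0) (P : ℝ → ℝ) :
    (∀ ε : ℝ, 0 < ε → ∃ (X : ℝ) (ω : ℂ), 0 < ω.re ∧ ‖1 - htilde p q P X ω‖ < ε) ↔
      ∀ ε : ℝ, 0 < ε → ∃ (X : ℝ) (z : ℂ), X ≠ 0 ∧ 0 < z.im ∧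
        ‖((4 * π * p / q : ℝ) : ℂ) - hilbertC (DXP P X) z‖ < ε := by
  have hp' : (p : ℂ) ≠ 0 := by exact_mod_cast hp
  have hπ : (π : ℂ) ≠ 0 := by exact_mod_cast pi_ne_zero
  have ha : 0 < ‖((q / (4 * π * p) : ℝ) : ℂ)‖ := by
    rw [norm_pos_iff]
    exact_mod_cast div_ne_zero hq (by positivity)
  set a := ‖((q / (4 * π * p) : ℝ) : ℂ)‖ with hadef
  have hre : ∀ (X : ℝ) (z : ℂ), (4 * (π : ℂ) ^ 2 * Complex.I * p * X * z).re =
      4 * π ^ 2 * (-(p * X) * z.im) := by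
    intro X z
    have : 4 * (π : ℂ) ^ 2 * Complex.I * p * X * z =
        ((4 * π ^ 2 * (p * X) : ℝ) : ℂ) * (Complex.I * z) := by
      push_cast
      ring
    rw [this, Complex.re_ofReal_mul, Complex.I_mul_re]
    ring
  have hπ2 : 0 < 4 * π ^ 2 := by positivity
  constructor
  · intro h ε hε
    obtain ⟨X, ω, hω, hlt⟩ := h (min 1 (a * ε)) (by positivity)
    obtain ⟨hlt1, hlt2⟩ := lt_min_iff.mp hlt
    have hX : X ≠ 0 := by
      rintro rfl
      simp [htilde] at hlt1
    have hX' : (X : ℂ) ≠ 0 := by exact_mod_cast hX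
    obtain ⟨z, rfl⟩ : ∃ z, ω = 4 * (π : ℂ) ^ 2 * Complex.I * p * X * z :=
      ⟨ω / (4 * (π : ℂ) ^ 2 * Complex.I * p * X), by
        have := Complex.I_ne_zero
        field_simp⟩
    rw [one_sub_htilde_eq hp hq hX, norm_mul, mul_lt_mul_iff_right₀ ha] at hlt2
    have hz : z.im ≠ 0 := by
      intro h0
      rw [hre, h0] at hω
      simp at hω
    rcases lt_or_gt_of_ne hz with hneg | hpos
    · refine ⟨X, starRingEnd ℂ z, hX, by simpa using hneg, ?_⟩
      rwa [hilbertC_conj, ← Complex.conj_ofReal, ← map_sub, Complex.norm_conj]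
    · exact ⟨X, z, hX, hpos, hlt2⟩
  · intro h ε hε
    obtain ⟨X, z, hX, hz, hlt⟩ := h (ε / a) (by positivity)
    obtain ⟨Y, hY, hpY, hD⟩ : ∃ Y : ℝ, Y ≠ 0 ∧ p * Y < 0 ∧ DXP P Y = DXP P X := by
      rcases lt_or_gt_of_ne (mul_ne_zero hp hX) with h1 | h1
      · exact ⟨X, hX, h1, rfl⟩
      · exact ⟨-X, neg_ne_zero.mpr hX, by linarith, DXP_neg P X⟩
    refine ⟨Y, 4 * (π : ℂ) ^ 2 * Complex.I * p * Y * z, ?_, ?_⟩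
    · rw [hre]
      exact mul_pos hπ2 (mul_pos (by linarith) hz)
    · rw [one_sub_htilde_eq hp hq hY, hD, norm_mul, ← hadef]
      rwa [lt_div_iff₀' ha] at hlt

/-- Equivalent formulations of failure of the stability condition:
`inf_{X, Re ω > 0} |1 − h̃(X,ω)| = 0` iff either there are `X* ∈ ℝ`, `Ω* ∈ ℂ∖ℝ` with
`H[D_{X*}P](Ω*) = H[D_{X*}P](conj Ω*) = 4πp/q`, or there are real `X*, Ω*` with
`H[D_{X*}P](Ω*) = 4πp/q` and `D_{X*}P(Ω*) = 0`. -/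
theorem stmt_17 (p q : ℝ) (hp : p ≠ 0) (hq : q ≠ 0)
    (P : SchwartzMap ℝ ℝ) (hPc : HasCompactSupport ⇑P) :
    (∀ ε : ℝ, 0 < ε → ∃ (X : ℝ) (ω : ℂ), 0 < ω.re ∧ ‖1 - htilde p q (⇑P) X ω‖ < ε) ↔
      ((∃ (Xs : ℝ) (Ωs : ℂ), Ωs.im ≠ 0 ∧
          hilbertC (DXP (⇑P) Xs) Ωs = ((4 * π * p / q : ℝ) : ℂ) ∧
          hilbertC (DXP (⇑P) Xs) (starRingEnd ℂ Ωs) = ((4 * π * p / q : ℝ) : ℂ)) ∨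
        (∃ Xs Ωs : ℝ,
          hilbertR (DXP (⇑P) Xs) Ωs = 4 * π * p / q ∧ DXP (⇑P) Xs Ωs = 0)) := by
  have hP2 : ContDiff ℝ 2 P := P.smooth 2
  have hP : ContDiff ℝ 1 P := P.smooth 1
  obtain ⟨L, hL'⟩ := ContDiff.lipschitzWith_of_hasCompactSupport hPc.deriv
    (hP2.deriv' (n := 1)) one_ne_zero
  have hL := abs_DXP_sub_le hP (L := L) fun a b => by
    simpa [Real.dist_eq] using hL'.dist_le_mul a b
  obtain ⟨M, hM'⟩ := (hP.continuous_deriv le_rfl).bounded_above_of_compact_support hPc.deriv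
  have hM := abs_DXP_le hP hM'
  obtain ⟨R, hR'⟩ : ∃ R, ∀ k, R < |k| → P k = 0 := by
    obtain ⟨R, hR⟩ := hPc.isCompact.isBounded.subset_closedBall 0
    refine ⟨R, fun k hk => image_eq_zero_of_notMem_tsupport fun h => ?_⟩
    have := hR h
    rw [mem_closedBall_zero_iff, Real.norm_eq_abs] at this
    linarith
  have hR := DXP_eq_zero hR'
  have hcont := continuous_DXP hP
  have hsupp : ∀ X, HasCompactSupport (DXP P X) := fun X => hasCompactSupport_of_abs_lt (hR X)
  have hcX : ∀ X, Continuous (DXP P X) := fun X => by fun_prop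
  set c := 4 * π * p / q with hc
  have hc0 : 0 < |c| := abs_pos.mpr (div_ne_zero (by positivity) hq)
  set Φ : ℝ × ℝ × ℝ → ℂ := fun v => (1 / (π : ℂ)) *
    ((cauchyRe (DXP P v.1) v.2.1 v.2.2 : ℂ) - cauchyIm (DXP P v.1) v.2.1 v.2.2 * Complex.I) with hΦ
  have hΦc : Continuous Φ := by
    have h1 := continuous_cauchyRe hcont hL
      (by fun_prop : Continuous fun X : ℝ => R + |X| / 2) hR
    have h2 := continuous_cauchyIm hcont hM
    fun_prop
  have hΦpos : ∀ (X : ℝ) (z : ℂ), 0 < z.im → hilbertC (DXP P X) z = Φ (X, z.re, z.im) := by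
    intro X z hz
    have h := cauchy_integral_eq (hcX X) (hsupp X) z.re hz
    rw [Complex.eta] at h
    rw [hilbertC, h, hΦ]
    congr 1
    apply Complex.ext <;> simp
  have hΦzero : ∀ X x : ℝ, Φ (X, x, 0) = c ↔ hilbertR (DXP P X) x = c ∧ DXP P X x = 0 := by
    intro X x
    have h1 := hilbertR_eq_cauchyRe (hcX X) (hsupp X) (hL X) (hR X) x
    have h2 : Φ (X, x, 0) = ⟨hilbertR (DXP P X) x, -DXP P X x⟩ := by
      have hπ : (π : ℂ) ≠ 0 := by exact_mod_cast pi_ne_zero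
      rw [hΦ, h1, Complex.mk_eq_add_mul_I]
      simp only [cauchyIm_zero]
      push_cast
      field_simp
      ring
    rw [h2, Complex.ext_iff]
    simp
  rw [inf_one_sub_htilde_iff hp hq]
  constructor
  · intro h
    obtain ⟨K, hK⟩ := exists_bound_of_le_norm_cauchy_integral hP hR' (δ := π * (|c| / 2))
      (by positivity)
    have hbd : ∀ (X : ℝ) (z : ℂ), 0 < z.im → ‖(c : ℂ) - hilbertC (DXP P X) z‖ < |c| / 2 →
        |X| ≤ K ∧ ‖z‖ ≤ K := by
      intro X z hz hlt
      refine hK X z hz ?_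
      have h1 : |c| / 2 ≤ ‖hilbertC (DXP P X) z‖ := by
        have := norm_sub_norm_le (c : ℂ) (hilbertC (DXP P X) z)
        rw [Complex.norm_real, Real.norm_eq_abs] at this
        linarith
      rw [hilbertC, norm_mul, norm_div, norm_one, Complex.norm_real, Real.norm_eq_abs,
        abs_of_pos pi_pos, one_div_mul_eq_div, le_div_iff₀' pi_pos] at h1
      exact h1
    have hmem : ∀ (X : ℝ) (z : ℂ), 0 < z.im → ‖(c : ℂ) - hilbertC (DXP P X) z‖ < |c| / 2 →
        (X, z.re, z.im) ∈ Set.Icc (-K) K ×ˢ Set.Icc (-K) K ×ˢ Set.Icc 0 K := by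
      intro X z hz hlt
      obtain ⟨h1, h2⟩ := hbd X z hz hlt
      exact ⟨abs_le.mp h1, abs_le.mp ((Complex.abs_re_le_norm z).trans h2), hz.le,
        (le_abs_self _).trans ((Complex.abs_im_le_norm z).trans h2)⟩
    obtain ⟨X₀, z₀, -, hz₀, hlt₀⟩ := h (|c| / 2) (by positivity)
    obtain ⟨⟨X, x, y⟩, ⟨-, -, hy, -⟩, hmin⟩ :=
      (isCompact_Icc.prod (isCompact_Icc.prod isCompact_Icc)).exists_isMinOn
        ⟨_, hmem X₀ z₀ hz₀ hlt₀⟩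
        (by fun_prop : Continuous fun v => ‖(c : ℂ) - Φ v‖).continuousOn
    have hval : Φ (X, x, y) = c := by
      by_contra hne
      have hpos : 0 < ‖(c : ℂ) - Φ (X, x, y)‖ := norm_pos_iff.mpr (sub_ne_zero.mpr (Ne.symm hne))
      obtain ⟨X₁, z₁, -, hz₁, hlt₁⟩ := h (min (|c| / 2) ‖(c : ℂ) - Φ (X, x, y)‖) (by positivity)
      obtain ⟨h1, h2⟩ := lt_min_iff.mp hlt₁
      have h3 := hmin (hmem X₁ z₁ hz₁ h1)
      rw [hΦpos X₁ z₁ hz₁] at h2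
      exact absurd h2 (not_lt.mpr h3)
    have hy : 0 ≤ y := hy
    rcases hy.eq_or_lt with rfl | hy
    · exact Or.inr ⟨X, x, (hΦzero X x).mp hval⟩
    · have h1 : hilbertC (DXP P X) ⟨x, y⟩ = c := (hΦpos X ⟨x, y⟩ hy).trans hval
      exact Or.inl ⟨X, ⟨x, y⟩, hy.ne', h1, by rw [hilbertC_conj, h1, Complex.conj_ofReal]⟩
  · intro h
    obtain ⟨X, x, y, hy, hval⟩ : ∃ X x y : ℝ, 0 ≤ y ∧ Φ (X, x, y) = c := by
      rcases h with ⟨X, z, hz, h1, h2⟩ | ⟨X, x, h⟩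
      · rcases lt_or_gt_of_ne hz with hneg | hpos
        · have hpos : 0 < (starRingEnd ℂ z).im := by simpa using hneg
          exact ⟨X, _, _, hpos.le, (hΦpos X _ hpos).symm.trans h2⟩
        · exact ⟨X, _, _, hpos.le, (hΦpos X z hpos).symm.trans h1⟩
      · exact ⟨X, x, 0, le_rfl, (hΦzero X x).mpr h⟩
    intro ε hε
    have hpath : Continuous fun t : ℝ => ‖(c : ℂ) - Φ (X + t, x, y + t)‖ := by fun_prop
    have hev : ∀ᶠ t in nhdsWithin (0 : ℝ) (Set.Ioi 0), ‖(c : ℂ) - Φ (X + t, x, y + t)‖ < ε :=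
      nhdsWithin_le_nhds (hpath.continuousAt.eventually_lt continuousAt_const (by simpa [hval]))
    have hne : ∀ᶠ t in nhdsWithin (0 : ℝ) (Set.Ioi 0), X + t ≠ 0 := by
      by_cases hX : X = 0
      · filter_upwards [self_mem_nhdsWithin] with t ht
        simpa [hX] using (show (0 : ℝ) < t from ht).ne'
      · refine nhdsWithin_le_nhds (ContinuousAt.eventually_ne (by fun_prop) (by simpa using hX))
    obtain ⟨t, ht, htε, htX⟩ := (eventually_mem_nhdsWithin.and (hev.and hne)).exists
    have ht : 0 < y + t := add_pos_of_nonneg_of_pos hy ht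
    refine ⟨X + t, ⟨x, y + t⟩, htX, ht, ?_⟩
    rwa [hΦpos _ _ ht]

end
end

section
/- Let P ∈ S(ℝ) be compactly supported and let p ≠ 0 and q ≠ 0 be real. Define h̃(X,ω) = q i ∫_ℝ ( P(k + X/2) − P(k − X/2) ) / ( ω − 4π² i p k X ) dk for X ∈ ℝ, Re ω > 0. Suppose that for every X ∈ ℝ and every t* ∈ ℝ with D_X P(t*) = 0 one has H[D_X P](t*) < 4πp/q. Then P is stable: there exists κ > 0 such that |1 − h̃(X,ω)| ≥ κ for all X ∈ ℝ and all ω with Re ω > 0. -/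
open MeasureTheory Real Filter

noncomputable section

open scoped Topology

/-- The Cauchy transform `∫ f(k) / (z - k) dk` of a real function. -/
def cauchyTransform (f : ℝ → ℝ) (z : ℂ) : ℂ := ∫ k : ℝ, (f k : ℂ) / (z - k)

/-- The logarithmic potential `∫ g(x - u) log(u + i|y|) du`. For `g = f'` and `y > 0` this is the
Cauchy transform of `f` at `x + iy`; it is continuous up to the boundary `y = 0`. -/
def logPotential (g : ℝ → ℝ) (x y : ℝ) : ℂ :=
  ∫ u : ℝ, (g (x - u) : ℂ) * Complex.log (u + |y| * Complex.I)

section LogPotential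

lemma norm_log_add_mul_I_le {u : ℝ} (hu : u ≠ 0) (y : ℝ) :
    ‖Complex.log (u + |y| * Complex.I)‖ ≤ |Real.log u| + |u| + |y| + π := by
  set z : ℂ := u + |y| * Complex.I with hz
  have hre : |u| ≤ ‖z‖ := by simpa [hz] using Complex.abs_re_le_norm z
  have hle : ‖z‖ ≤ |u| + |y| := by
    refine (norm_add_le _ _).trans ?_
    simp
  have hu0 : 0 < |u| := abs_pos.2 hu
  have hz0 : 0 < ‖z‖ := hu0.trans_le hre
  have h1 : ‖Complex.log z‖ ≤ |Real.log ‖z‖| + π := by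
    refine (Complex.norm_le_abs_re_add_abs_im _).trans ?_
    rw [Complex.log_re, Complex.log_im]
    gcongr
    exact Complex.abs_arg_le_pi z
  have h2 : |Real.log ‖z‖| ≤ |Real.log u| + |u| + |y| := by
    rw [abs_le]
    constructor
    · have := Real.log_le_log hu0 hre
      rw [Real.log_abs] at this
      have := neg_abs_le (Real.log u)
      have := abs_nonneg y
      linarith
    · have := Real.log_le_sub_one_of_pos hz0
      have := abs_nonneg (Real.log u)
      linarith
  linarith

lemma integrable_indicator_log_bound (B C M : ℝ) :
    Integrable (Set.indicator (Set.Icc (-B) B)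
      (fun u : ℝ => M * (|Real.log u| + |u| + C + π))) := by
  rw [integrable_indicator_iff measurableSet_Icc]
  refine Integrable.const_mul (((Integrable.add ?_ ?_).add ?_).add ?_) M
  · by_cases h : -B ≤ B
    · exact ((intervalIntegrable_iff_integrableOn_Icc_of_le h).1
        intervalIntegral.intervalIntegrable_log').abs
    · simp [Set.Icc_eq_empty h]
  · exact continuous_abs.integrableOn_Icc
  · exact continuous_const.integrableOn_Icc
  · exact continuous_const.integrableOn_Icc

lemma continuousAt_log_add_abs_mul_I {u : ℝ} (hu : u ≠ 0) (y : ℝ) :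
    ContinuousAt (fun y : ℝ => Complex.log (u + |y| * Complex.I)) y := by
  by_cases h : (u : ℂ) + |y| * Complex.I ∈ Complex.slitPlane
  · exact ContinuousAt.clog (by fun_prop) h
  · rw [Complex.mem_slitPlane_iff, not_or] at h
    have h1 : u < 0 := lt_of_le_of_ne (by simpa using h.1) hu
    have h2 : y = 0 := by simpa using h.2
    subst h2
    have hc := Complex.continuousWithinAt_log_of_re_neg_of_im_zero
      (z := (u : ℂ) + |(0 : ℝ)| * Complex.I) (by simpa using h1) (by simp)
    have ht : Tendsto (fun y : ℝ => (u : ℂ) + |y| * Complex.I) (𝓝 0)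
        (𝓝[{z : ℂ | 0 ≤ z.im}] ((u : ℂ) + |(0 : ℝ)| * Complex.I)) := by
      refine tendsto_nhdsWithin_iff.2 ⟨?_, Eventually.of_forall fun y => by simp⟩
      exact Continuous.tendsto (by fun_prop) 0
    exact Tendsto.comp hc ht

lemma measurable_log_add_abs_mul_I (y : ℝ) :
    Measurable (fun u : ℝ => Complex.log (u + |y| * Complex.I)) := by fun_prop

/-- Logarithmic potentials depend continuously on parameters. -/
lemma continuous_logPotential {g : ℝ → ℝ → ℝ} (hg : Continuous (Function.uncurry g)) {R : ℝ}
    (hs : ∀ X k, R + |X| < |k| → g X k = 0) :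
    Continuous (fun v : ℝ × ℝ × ℝ => logPotential (g v.1) v.2.1 v.2.2) := by
  rw [continuous_iff_continuousAt]
  intro v₀
  obtain ⟨A, hA⟩ : ∃ A : ℝ, ‖v₀‖ < A := exists_gt _
  set B := R + 2 * A with hB
  obtain ⟨M, hM⟩ := ((isCompact_Icc (a := -A) (b := A)).prod
    (isCompact_Icc (a := -(A + B)) (b := A + B))).exists_bound_of_continuousOn hg.continuousOn
  have hev : ∀ᶠ v : ℝ × ℝ × ℝ in 𝓝 v₀, ‖v‖ < A :=
    continuous_norm.continuousAt.eventually (gt_mem_nhds hA)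
  have hcoord : ∀ v : ℝ × ℝ × ℝ, ‖v‖ < A → |v.1| < A ∧ |v.2.1| < A ∧ |v.2.2| < A := by
    intro v hv
    simpa [Prod.norm_def] using hv
  unfold logPotential
  refine continuousAt_of_dominated
    (bound := Set.indicator (Set.Icc (-B) B) fun u : ℝ => M * (|Real.log u| + |u| + A + π))
    ?_ ?_ (integrable_indicator_log_bound B A M) ?_
  · refine Eventually.of_forall fun v => ?_
    refine Measurable.aestronglyMeasurable (Measurable.mul ?_ (measurable_log_add_abs_mul_I _))
    have : Continuous fun u : ℝ => ((g v.1 (v.2.1 - u) : ℝ) : ℂ) :=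
      Complex.continuous_ofReal.comp
        (hg.comp (continuous_const.prodMk (continuous_const.sub continuous_id)))
    exact this.measurable
  · filter_upwards [hev] with v hv
    obtain ⟨h1, h2, h3⟩ := hcoord v hv
    filter_upwards [Measure.ae_ne volume (0 : ℝ)] with u hu
    by_cases huB : u ∈ Set.Icc (-B) B
    · rw [Set.indicator_of_mem huB, norm_mul]
      have hgM : ‖((g v.1 (v.2.1 - u) : ℝ) : ℂ)‖ ≤ M := by
        rw [Complex.norm_real]
        refine hM (v.1, v.2.1 - u) ⟨abs_le.1 h1.le, abs_le.1 ?_⟩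
        refine (abs_sub _ _).trans (add_le_add h2.le (abs_le.2 huB))
      have hM0 := (norm_nonneg _).trans hgM
      refine mul_le_mul hgM ((norm_log_add_mul_I_le hu _).trans ?_) (norm_nonneg _) hM0
      gcongr
    · rw [Set.indicator_of_notMem huB]
      have huB' : B < |u| := not_le.1 fun h => huB (abs_le.1 h)
      rw [hs]
      · simp
      · have := abs_sub_abs_le_abs_sub u v.2.1
        rw [abs_sub_comm] at this
        linarith
  · filter_upwards [Measure.ae_ne volume (0 : ℝ)] with u hu
    refine ContinuousAt.mul ?_ ?_
    · have : Continuous fun v : ℝ × ℝ × ℝ => ((g v.1 (v.2.1 - u) : ℝ) : ℂ) :=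
        Complex.continuous_ofReal.comp 
          (hg.comp (continuous_fst.prodMk (continuous_snd.fst.sub continuous_const)))
      exact this.continuousAt
    · exact ContinuousAt.comp (f := fun v : ℝ × ℝ × ℝ => v.2.2)
        (continuousAt_log_add_abs_mul_I hu v₀.2.2) (by fun_prop)

end LogPotential

section BoundaryValues

variable {f g : ℝ → ℝ}

lemma integrable_mul_log (hg : Continuous g) (hc : HasCompactSupport g) (x y : ℝ) :
    Integrable (fun u : ℝ => (g (x - u) : ℂ) * Complex.log (u + |y| * Complex.I)) := by
  obtain ⟨R, hR⟩ := hc.isCompact.isBounded.subset_closedBall 0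
  obtain ⟨M, hM⟩ := hc.exists_bound_of_continuous hg
  set B := R + |x| with hB
  refine (integrable_indicator_log_bound B |y| M).mono' ?_ ?_
  · refine Measurable.aestronglyMeasurable (Measurable.mul ?_ (measurable_log_add_abs_mul_I _))
    exact (Complex.continuous_ofReal.comp (hg.comp (continuous_sub_left x))).measurable
  · filter_upwards [Measure.ae_ne volume (0 : ℝ)] with u hu
    by_cases huB : u ∈ Set.Icc (-B) B
    · rw [Set.indicator_of_mem huB, norm_mul, Complex.norm_real]
      exact mul_le_mul (hM _) (norm_log_add_mul_I_le hu _) (norm_nonneg _)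
        ((norm_nonneg _).trans (hM 0))
    · rw [Set.indicator_of_notMem huB]
      have huB' : B < |u| := not_le.1 fun h => huB (abs_le.1 h)
      have : g (x - u) = 0 := by
        by_contra hne
        have := hR (subset_closure (Function.mem_support.2 hne))
        rw [mem_closedBall_zero_iff, Real.norm_eq_abs, abs_sub_comm] at this
        have := abs_sub_abs_le_abs_sub u x
        linarith
      simp [this]

/-- Integration by parts in the Cauchy transform. -/
lemma cauchyTransform_eq_logPotential (hf : ContDiff ℝ 1 f) (hc : HasCompactSupport f)
    (x : ℝ) {y : ℝ} (hy : 0 < y) :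
    cauchyTransform f (x + y * Complex.I) = logPotential (deriv f) x y := by
  have hcs : ∀ {φ : ℝ → ℝ}, HasCompactSupport φ →
      HasCompactSupport fun u : ℝ => (φ (x - u) : ℂ) := by
    intro φ hφ
    have h1 : HasCompactSupport (φ ∘ Homeomorph.subLeft x) := hφ.comp_homeomorph _
    exact h1.comp_left (g := fun r : ℝ => (r : ℂ)) (by simp)
  have hslit : ∀ u : ℝ, (u : ℂ) + y * Complex.I ∈ Complex.slitPlane := fun u =>
    Complex.mem_slitPlane_iff.2 (Or.inr (by simpa using hy.ne'))
  have hfc : Continuous fun u : ℝ => (f (x - u) : ℂ) :=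
    Complex.continuous_ofReal.comp (hf.continuous.comp (continuous_sub_left x))
  have hlog : Continuous fun u : ℝ => Complex.log (u + y * Complex.I) :=
    Continuous.clog (by fun_prop) hslit
  have hinv : Continuous fun u : ℝ => ((u : ℂ) + y * Complex.I)⁻¹ :=
    Continuous.inv₀ (by fun_prop) fun u => Complex.slitPlane_ne_zero (hslit u)
  have hparts := integral_mul_deriv_eq_deriv_mul_of_integrable
    (u := fun u : ℝ => (f (x - u) : ℂ)) (u' := fun u : ℝ => -((deriv f (x - u) : ℝ) : ℂ))
    (v := fun u : ℝ => Complex.log (u + y * Complex.I))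
    (v' := fun u : ℝ => ((u : ℂ) + y * Complex.I)⁻¹) ?_ ?_ ?_ ?_ ?_
  · have hsub : cauchyTransform f (x + y * Complex.I)
        = ∫ u : ℝ, (f (x - u) : ℂ) * ((u : ℂ) + y * Complex.I)⁻¹ := by
      unfold cauchyTransform
      rw [← integral_sub_left_eq_self _ volume x]
      refine integral_congr_ae (Eventually.of_forall fun u => ?_)
      simp only [div_eq_mul_inv]
      congr 2
      push_cast
      ring
    rw [hsub, hparts, ← integral_neg]
    simp only [logPotential, neg_mul, neg_neg, abs_of_pos hy]
  · intro u _
    have h1 : HasDerivAt f (deriv f (x - u)) (x - u) :=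
      (hf.differentiable one_ne_zero _).hasDerivAt
    have h2 := (h1.comp_const_sub x u).ofReal_comp
    simpa using h2
  · intro u _
    have h1 : HasDerivAt (fun u : ℝ => (u : ℂ) + y * Complex.I) 1 u :=
      (Complex.ofRealCLM.hasDerivAt (x := u)).add_const _
    simpa using h1.clog_real (hslit u)
  · exact (hfc.mul hinv).integrable_of_hasCompactSupport (hcs hc).mul_right
  · have := (integrable_mul_log (hf.continuous_deriv le_rfl) hc.deriv x y).neg
    refine this.congr (Eventually.of_forall fun u => ?_)
    simp [abs_of_pos hy]
  · exact (hfc.mul hlog).integrable_of_hasCompactSupport (hcs hc).mul_right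

lemma logPotential_deriv_zero_im (hf : ContDiff ℝ 1 f) (hc : HasCompactSupport f) (x : ℝ) :
    (logPotential (deriv f) x 0).im = -π * f x := by
  have hi := integrable_mul_log (hf.continuous_deriv le_rfl) hc.deriv x 0
  have h1 : (logPotential (deriv f) x 0).im
      = ∫ u : ℝ, (((deriv f (x - u) : ℝ) : ℂ) * Complex.log (u + |(0 : ℝ)| * Complex.I)).im :=
    (integral_im hi).symm
  rw [h1, ← integral_sub_left_eq_self _ volume x]
  have h2 : ∀ t : ℝ, (((deriv f (x - (x - t)) : ℝ) : ℂ) *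
      Complex.log (((x - t : ℝ) : ℂ) + |(0 : ℝ)| * Complex.I)).im
      = (Set.Ioi x).indicator (fun t => π * deriv f t) t := by
    intro t
    rw [Complex.im_ofReal_mul, Complex.log_im, abs_zero, Complex.ofReal_zero, zero_mul, add_zero,
      sub_sub_cancel]
    by_cases ht : x < t
    · rw [Set.indicator_of_mem (Set.mem_Ioi.2 ht), Complex.arg_ofReal_of_neg (by linarith),
        mul_comm]
    · rw [Set.indicator_of_notMem (by simpa using ht), Complex.arg_ofReal_of_nonneg (by linarith),
        mul_zero]
  simp only [h2]
  rw [integral_indicator measurableSet_Ioi, integral_const_mul,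
    HasCompactSupport.integral_Ioi_deriv_eq hf hc]
  ring

lemma log_norm_ofReal_sub (x t : ℝ) : Real.log ‖(x : ℂ) - t‖ = Real.log (x - t) := by
  rw [← Complex.ofReal_sub, Complex.norm_real, Real.norm_eq_abs, Real.log_abs]

lemma logPotential_zero_re (hg : Continuous g) (hc : HasCompactSupport g) (x : ℝ) :
    (logPotential g x 0).re = ∫ t : ℝ, g t * Real.log (x - t) := by
  have hi := integrable_mul_log hg hc x 0
  have h1 : (logPotential g x 0).re
      = ∫ u : ℝ, (((g (x - u) : ℝ) : ℂ) * Complex.log (u + |(0 : ℝ)| * Complex.I)).re :=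
    (integral_re hi).symm
  rw [h1, ← integral_sub_left_eq_self _ volume x]
  simp [Complex.log_re, log_norm_ofReal_sub]

lemma integrable_mul_log_sub (hg : Continuous g) (hc : HasCompactSupport g) (x : ℝ) :
    Integrable fun t : ℝ => g t * Real.log (x - t) := by
  have h := ((integrable_mul_log hg hc x 0).re).comp_sub_left x
  simpa [Complex.log_re, log_norm_ofReal_sub] using h

/-- Integration by parts in the truncated singular integral. -/
lemma setIntegral_div_sub_eq (hf : ContDiff ℝ 1 f) (hc : HasCompactSupport f) (x : ℝ)
    {ε : ℝ} (hε : 0 < ε) :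
    ∫ t in {t : ℝ | ε < |x - t|}, f t / (x - t)
      = (f (x + ε) - f (x - ε)) * Real.log ε
        + ∫ t in {t : ℝ | ε < |x - t|}, deriv f t * Real.log (x - t) := by
  have hset : {t : ℝ | ε < |x - t|} = Set.Iio (x - ε) ∪ Set.Ioi (x + ε) := by
    ext t
    simp only [Set.mem_ofPred_eq, lt_abs, Set.mem_union, Set.mem_Iio, Set.mem_Ioi]
    constructor <;> rintro (h | h)
    · left; linarith
    · right; linarith
    · left; linarith
    · right; linarith
  have hdisj : Disjoint (Set.Iio (x - ε)) (Set.Ioi (x + ε)) := by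
    rw [Set.disjoint_left]
    intro t h1 h2
    simp only [Set.mem_Iio, Set.mem_Ioi] at h1 h2
    linarith
  have hL := integrable_mul_log_sub (hf.continuous_deriv le_rfl) hc.deriv x
  have hder : ∀ t, HasDerivAt f (deriv f t) t := fun t =>
    (hf.differentiable one_ne_zero t).hasDerivAt
  have hv : ∀ t, t ≠ x → HasDerivAt (fun t => -Real.log (x - t)) ((x - t)⁻¹) t := by
    intro t ht
    have h1 := (((hasDerivAt_id t).const_sub x).log (sub_ne_zero.2 ht.symm)).fun_neg
    simpa [neg_div] using h1
  have hI : IntegrableOn (fun t => f t * (x - t)⁻¹) {t : ℝ | ε < |x - t|} := by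
    have hfi : Integrable f := hf.continuous.integrable_of_hasCompactSupport hc
    refine Integrable.mono' (hfi.norm.const_mul ε⁻¹).integrableOn ?_ ?_
    · exact (hf.continuous.measurable.mul (by fun_prop)).aestronglyMeasurable
    · have hm : MeasurableSet {t : ℝ | ε < |x - t|} :=
        (isOpen_lt continuous_const (by fun_prop)).measurableSet
      filter_upwards [ae_restrict_mem hm] with t ht
      rw [norm_mul, mul_comm, norm_inv, Real.norm_eq_abs (x - t)]
      gcongr
  have hz : f =ᶠ[cocompact ℝ] 0 := by
    rwa [← coclosedCompact_eq_cocompact, ← hasCompactSupport_iff_eventuallyEq]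
  have hzero : ∀ l : Filter ℝ, l ≤ cocompact ℝ →
      Tendsto (f * fun t => -Real.log (x - t)) l (𝓝 0) := by
    intro l hl
    refine Tendsto.congr' ?_ tendsto_const_nhds
    filter_upwards [hz.filter_mono hl] with t ht
    simp [ht]
  have hcont : ∀ t, t ≠ x → Tendsto (f * fun t => -Real.log (x - t)) (𝓝 t)
      (𝓝 (f t * -Real.log (x - t))) := fun t ht =>
    (hder t).continuousAt.mul (hv t ht).continuousAt
  rw [hset] at hI ⊢
  have hleft := integral_Iic_mul_deriv_eq_deriv_mul (a := x - ε) (u := f) (u' := deriv f)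
    (v := fun t => -Real.log (x - t)) (v' := fun t => (x - t)⁻¹) (fun t _ => hder t)
    (fun t ht => hv t (by have := Set.mem_Iio.1 ht; linarith))
    (by rw [integrableOn_Iic_iff_integrableOn_Iio]; exact hI.mono_set Set.subset_union_left)
    (by
      refine (hL.neg.integrableOn (s := Set.Iic (x - ε))).congr_fun (fun t _ => ?_)
        measurableSet_Iic
      simp)
    ((hcont (x - ε) (by linarith)).mono_left nhdsWithin_le_nhds) (hzero _ atBot_le_cocompact)
  have hright := integral_Ioi_mul_deriv_eq_deriv_mul (a := x + ε) (u := f) (u' := deriv f)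
    (v := fun t => -Real.log (x - t)) (v' := fun t => (x - t)⁻¹) (fun t _ => hder t)
    (fun t ht => hv t (by have := Set.mem_Ioi.1 ht; linarith))
    (hI.mono_set Set.subset_union_right)
    (by
      refine (hL.neg.integrableOn (s := Set.Ioi (x + ε))).congr_fun (fun t _ => ?_)
        measurableSet_Ioi
      simp)
    ((hcont (x + ε) (by linarith)).mono_left nhdsWithin_le_nhds) (hzero _ atTop_le_cocompact)
  simp only [div_eq_mul_inv]
  rw [setIntegral_union hdisj measurableSet_Ioi (hI.mono_set Set.subset_union_left)
      (hI.mono_set Set.subset_union_right),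
    setIntegral_union hdisj measurableSet_Ioi hL.integrableOn hL.integrableOn,
    ← integral_Iic_eq_integral_Iio, ← integral_Iic_eq_integral_Iio, hleft, hright]
  simp only [mul_neg, integral_neg, sub_sub_cancel, sub_add_cancel_left, Real.log_neg_eq_log]
  ring

lemma tendsto_sub_mul_log (hf : ContDiff ℝ 1 f) (x : ℝ) :
    Tendsto (fun ε => (f (x + ε) - f (x - ε)) * Real.log ε) (𝓝[>] 0) (𝓝 0) := by
  have hd : HasDerivAt (fun ε => f (x + ε) - f (x - ε)) (2 * deriv f x) 0 := by
    have h0 : HasDerivAt f (deriv f x) x := (hf.differentiable one_ne_zero x).hasDerivAt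
    have h1 : HasDerivAt (fun ε => f (x + ε)) (deriv f x) 0 :=
      HasDerivAt.comp_const_add x 0 (by simpa using h0)
    have h2 : HasDerivAt (fun ε => f (x - ε)) (-deriv f x) 0 :=
      HasDerivAt.comp_const_sub x 0 (by simpa using h0)
    rw [two_mul, ← sub_neg_eq_add]
    exact h1.sub h2
  have hs := (hd.tendsto_slope_zero_right).mul
    ((continuous_mul_log.tendsto 0).mono_left nhdsWithin_le_nhds)
  simp only [zero_add, add_zero, sub_zero, sub_self, zero_mul, mul_zero, smul_eq_mul] at hs
  refine hs.congr' ?_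
  filter_upwards [self_mem_nhdsWithin] with ε hε
  have : ε ≠ 0 := (Set.mem_Ioi.1 hε).ne'
  field_simp

lemma aecover_lt_abs_sub (x : ℝ) :
    AECover volume (𝓝[>] (0 : ℝ)) fun ε => {t : ℝ | ε < |x - t|} where
  ae_eventually_mem := by
    filter_upwards [Measure.ae_ne volume x] with t ht
    exact eventually_nhdsWithin_of_eventually_nhds
      (gt_mem_nhds (abs_pos.2 (sub_ne_zero.2 ht.symm)))
  measurableSet _ := (isOpen_lt continuous_const (by fun_prop)).measurableSet

/-- The Hilbert transform is the real part of the boundary value of the Cauchy transform. -/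
lemma hilbertR_eq (hf : ContDiff ℝ 1 f) (hc : HasCompactSupport f) (x : ℝ) :
    hilbertR f x = 1 / π * (logPotential (deriv f) x 0).re := by
  refine Tendsto.limUnder_eq (Tendsto.const_mul _ ?_)
  have hL := integrable_mul_log_sub (hf.continuous_deriv le_rfl) hc.deriv x
  have h := (tendsto_sub_mul_log hf x).add
    ((aecover_lt_abs_sub x).integral_tendsto_of_countably_generated hL)
  rw [logPotential_zero_re (hf.continuous_deriv le_rfl) hc.deriv]
  rw [zero_add] at h
  refine h.congr' ?_
  filter_upwards [self_mem_nhdsWithin] with ε hε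
  exact (setIntegral_div_sub_eq hf hc x hε).symm

end BoundaryValues

section Decay

variable {f : ℝ → ℝ}

lemma exists_forall_eq_zero_of_lt_abs (hc : HasCompactSupport f) :
    ∃ R, ∀ k, R < |k| → f k = 0 := by
  obtain ⟨R, hR⟩ := hc.isCompact.isBounded.subset_closedBall 0
  refine ⟨R, fun k hk => ?_⟩
  by_contra hne
  have := hR (subset_closure (Function.mem_support.2 hne))
  rw [mem_closedBall_zero_iff, Real.norm_eq_abs] at this
  linarith

lemma continuous_logPotential_const (hf : Continuous f) (hc : HasCompactSupport f) :
    Continuous (fun v : ℝ × ℝ => logPotential f v.1 v.2) := by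
  obtain ⟨R, hR⟩ := exists_forall_eq_zero_of_lt_abs hc
  have h := continuous_logPotential (g := fun _ => f) (R := R) (hf.comp continuous_snd)
    fun X k hk => hR k (by have := abs_nonneg X; linarith)
  exact h.comp (continuous_const.prodMk continuous_id : Continuous fun v : ℝ × ℝ => ((0 : ℝ), v))

/-- Cauchy transforms decay at infinity, uniformly for bounded parameters. -/
lemma exists_norm_cauchyTransform_le {f : ℝ → ℝ → ℝ} (hf : Continuous (Function.uncurry f)) {R : ℝ}
    (hs : ∀ X k, R + |X| < |k| → f X k = 0) (A : ℝ) {ε : ℝ} (hε : 0 < ε) :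
    ∃ ρ : ℝ, ∀ X, |X| ≤ A → ∀ z : ℂ, ρ ≤ ‖z‖ → ‖cauchyTransform (f X) z‖ ≤ ε := by
  set B := |R| + |A| with hB
  have hB0 : 0 ≤ B := by positivity
  obtain ⟨M', hM'⟩ := ((isCompact_Icc (a := -A) (b := A)).prod
    (isCompact_Icc (a := -B) (b := B))).exists_bound_of_continuousOn hf.continuousOn
  set M := max M' 0
  have hM0 : 0 ≤ M := le_max_right _ _
  set δ := M * (2 * B) / ε + 1 with hδ
  have hδ0 : 0 < δ := by positivity
  refine ⟨B + δ, fun X hX z hz => ?_⟩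
  have hset : cauchyTransform (f X) z = ∫ k in Set.Icc (-B) B, (f X k : ℂ) / (z - k) := by
    refine (setIntegral_eq_integral_of_forall_compl_eq_zero fun k hk => ?_).symm
    have hk' : B < |k| := not_le.1 fun h => hk (abs_le.1 h)
    rw [hs X k]
    · simp
    · have := le_abs_self R
      have := le_abs_self A
      linarith
  have hbound : ∀ k ∈ Set.Icc (-B) B, ‖(f X k : ℂ) / (z - k)‖ ≤ M / δ := by
    intro k hk
    rw [norm_div, Complex.norm_real]
    have h1 : ‖f X k‖ ≤ M := (hM' (X, k) ⟨abs_le.1 hX, hk⟩).trans (le_max_left _ _)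
    have h2 : δ ≤ ‖z - k‖ := by
      have h3 := norm_sub_norm_le z k
      rw [Complex.norm_real, Real.norm_eq_abs] at h3
      have := abs_le.2 hk
      linarith
    gcongr
  have hvol : volume.real (Set.Icc (-B) B) = 2 * B := by
    rw [Real.volume_real_Icc_of_le (by linarith)]
    ring
  rw [hset]
  refine (norm_setIntegral_le_of_norm_le_const measure_Icc_lt_top hbound).trans ?_
  rw [hvol, div_mul_eq_mul_div, div_le_iff₀ hδ0, hδ, mul_add ε, mul_div_cancel₀ _ hε.ne']
  linarith

lemma exists_norm_logPotential_le {f : ℝ → ℝ → ℝ} (hf : Continuous (Function.uncurry f)) {R : ℝ}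
    (hs : ∀ X k, R + |X| < |k| → f X k = 0) (hd : ∀ X, ContDiff ℝ 1 (f X)) (A : ℝ)
    {ε : ℝ} (hε : 0 < ε) :
    ∃ ρ : ℝ, ∀ X, |X| ≤ A → ∀ x y : ℝ, 0 ≤ y → (ρ ≤ |x| ∨ ρ ≤ y) →
      ‖logPotential (deriv (f X)) x y‖ ≤ ε := by
  obtain ⟨ρ', hρ'⟩ := exists_norm_cauchyTransform_le hf hs A hε
  refine ⟨max ρ' 1, fun X hX x y hy hxy => ?_⟩
  have hc : HasCompactSupport (f X) :=
    HasCompactSupport.intro (isCompact_Icc (a := -(R + |X|)) (b := R + |X|)) fun k hk =>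
      hs X k (not_le.1 fun h => hk (abs_le.1 h))
  have hpos : ∀ y : ℝ, 0 < y → (max ρ' 1 ≤ |x| ∨ max ρ' 1 ≤ y) →
      ‖logPotential (deriv (f X)) x y‖ ≤ ε := by
    intro y hy hxy
    rw [← cauchyTransform_eq_logPotential (hd X) hc x hy]
    refine hρ' X hX _ ?_
    have h1 := Complex.abs_re_le_norm ((x : ℂ) + y * Complex.I)
    have h2 := Complex.abs_im_le_norm ((x : ℂ) + y * Complex.I)
    simp only [Complex.add_re, Complex.ofReal_re, Complex.re_ofReal_mul, Complex.I_re, mul_zero,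
      add_zero, Complex.add_im, Complex.ofReal_im, Complex.im_ofReal_mul, Complex.I_im, mul_one,
      zero_add, abs_of_pos hy] at h1 h2
    have := le_max_left ρ' 1
    rcases hxy with h | h <;> linarith
  rcases hy.eq_or_lt with rfl | hy
  · have hx : max ρ' 1 ≤ |x| := by
      rcases hxy with h | h
      · exact h
      · have := le_max_right ρ' 1
        linarith
    have hcont := (continuous_logPotential_const ((hd X).continuous_deriv le_rfl) hc.deriv).comp
      (continuous_const.prodMk continuous_id : Continuous fun y : ℝ => (x, y))
    refine le_of_tendsto ((hcont.norm.tendsto 0).mono_left (nhdsWithin_le_nhds (s := Set.Ioi 0))) ?_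
    filter_upwards [self_mem_nhdsWithin] with y hy
    exact hpos y hy (Or.inl hx)
  · exact hpos y hy hxy

lemma exists_norm_logPotential_deriv_le (hf : ContDiff ℝ 1 f) (hc : HasCompactSupport f)
    {ε : ℝ} (hε : 0 < ε) :
    ∃ ρ : ℝ, ∀ x y : ℝ, 0 ≤ y → (ρ ≤ |x| ∨ ρ ≤ y) → ‖logPotential (deriv f) x y‖ ≤ ε := by
  obtain ⟨R, hR⟩ := exists_forall_eq_zero_of_lt_abs hc
  obtain ⟨ρ, hρ⟩ := exists_norm_logPotential_le (f := fun _ => f) (R := R)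
    (hf.continuous.comp continuous_snd)
    (fun X k hk => hR k (by have := abs_nonneg X; linarith)) (fun _ => hf) 0 hε
  exact ⟨ρ, hρ 0 (by simp)⟩

lemma exists_bound_logPotential_deriv (hf : ContDiff ℝ 1 f) (hc : HasCompactSupport f) :
    ∃ M : ℝ, 0 ≤ M ∧ ∀ x y : ℝ, 0 ≤ y → ‖logPotential (deriv f) x y‖ ≤ M := by
  obtain ⟨ρ, hρ⟩ := exists_norm_logPotential_deriv_le hf hc one_pos
  obtain ⟨M, hM⟩ := ((isCompact_Icc (a := -ρ) (b := ρ)).prod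
    (isCompact_Icc (a := (0 : ℝ)) (b := ρ))).exists_bound_of_continuousOn
    (continuous_logPotential_const (hf.continuous_deriv le_rfl) hc.deriv).continuousOn
  refine ⟨max M 1, by positivity, fun x y hy => ?_⟩
  by_cases h : ρ ≤ |x| ∨ ρ ≤ y
  · exact (hρ x y hy h).trans (le_max_right _ _)
  · push Not at h
    exact (hM (x, y) ⟨abs_le.1 h.1.le, hy, h.2.le⟩).trans (le_max_left _ _)

end Decay

section OpenMapping

variable {f : ℝ → ℝ}

lemma abs_im_le_norm_sub_ofReal (z : ℂ) (k : ℝ) : |z.im| ≤ ‖z - k‖ := by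
  simpa using Complex.abs_im_le_norm (z - k)

lemma sub_ofReal_ne_zero {z : ℂ} (hz : z.im ≠ 0) (k : ℝ) : z - k ≠ 0 :=
  norm_pos_iff.1 ((abs_pos.2 hz).trans_le (abs_im_le_norm_sub_ofReal z k))

lemma integrable_div_sub (hf : Continuous f) (hc : HasCompactSupport f) {z : ℂ} (hz : z.im ≠ 0) :
    Integrable fun k : ℝ => (f k : ℂ) / (z - k) := by
  have h1 : HasCompactSupport fun k : ℝ => (f k : ℂ) :=
    hc.comp_left (g := fun r : ℝ => (r : ℂ)) (by simp)
  have h2 : Continuous fun k : ℝ => (z - k)⁻¹ :=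
    Continuous.inv₀ (by fun_prop) (sub_ofReal_ne_zero hz)
  simp only [div_eq_mul_inv]
  exact ((Complex.continuous_ofReal.comp hf).mul h2).integrable_of_hasCompactSupport h1.mul_right

lemma differentiableOn_cauchyTransform (hf : Continuous f) (hc : HasCompactSupport f) :
    DifferentiableOn ℂ (cauchyTransform f) {z : ℂ | 0 < z.im} := by
  intro z₀ hz₀
  have hz₀' : 0 < z₀.im := hz₀
  have hs : {z : ℂ | z₀.im / 2 < z.im} ∈ 𝓝 z₀ :=
    (isOpen_lt continuous_const Complex.continuous_im).mem_nhds (by simpa using hz₀')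
  have hmeas : ∀ z : ℂ, AEStronglyMeasurable (fun k : ℝ => (f k : ℂ) / (z - k)) := fun z =>
    (Measurable.div (Complex.continuous_ofReal.comp hf).measurable
      (by fun_prop)).aestronglyMeasurable
  refine (hasDerivAt_integral_of_dominated_loc_of_deriv_le (𝕜 := ℂ)
    (F := fun (z : ℂ) (k : ℝ) => (f k : ℂ) / (z - k))
    (F' := fun (z : ℂ) (k : ℝ) => -(f k : ℂ) / (z - k) ^ 2)
    (bound := fun k => |f k| / (z₀.im / 2) ^ 2) hs
    (Eventually.of_forall hmeas) (integrable_div_sub hf hc hz₀'.ne') ?_ ?_ ?_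
    ?_).2.differentiableAt.differentiableWithinAt
  · exact (Measurable.div (Complex.continuous_ofReal.comp hf).measurable.neg
      (by fun_prop)).aestronglyMeasurable
  · refine Eventually.of_forall fun k z hz => ?_
    have hz' : z₀.im / 2 < z.im := hz
    rw [norm_div, norm_neg, Complex.norm_real, norm_pow, Real.norm_eq_abs]
    have h1 : z₀.im / 2 ≤ ‖z - k‖ :=
      hz'.le.trans ((le_abs_self _).trans (abs_im_le_norm_sub_ofReal z k))
    gcongr
  · exact (hf.integrable_of_hasCompactSupport hc).abs.div_const _
  · refine Eventually.of_forall fun k z hz => ?_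
    have hz' : z₀.im / 2 < z.im := hz
    have hne : z - k ≠ 0 := sub_ofReal_ne_zero (by linarith : (0 : ℝ) < z.im).ne' k
    have h := (hasDerivAt_const z (f k : ℂ)).fun_div ((hasDerivAt_id z).sub_const (k : ℂ)) hne
    simpa using h

/-- If the boundary values of the Cauchy transform of `f` do not meet the half-line `[πl, ∞)`,
then neither do its values in the upper half-plane. -/
lemma logPotential_deriv_ne (hf : ContDiff ℝ 1 f) (hc : HasCompactSupport f) {l : ℝ} (hl : 0 < l)
    (hyp : ∀ x, f x = 0 → hilbertR f x < l) (x : ℝ) {y : ℝ} (hy : 0 ≤ y) :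
    logPotential (deriv f) x y ≠ ((π * l : ℝ) : ℂ) := by
  intro hxy
  have hpl : 0 < π * l := by positivity
  set Φ : ℝ × ℝ → ℂ := fun v => logPotential (deriv f) v.1 v.2 with hΦ
  have hcont : Continuous Φ :=
    continuous_logPotential_const (hf.continuous_deriv le_rfl) hc.deriv
  obtain ⟨ρ, hρ⟩ := exists_norm_logPotential_deriv_le hf hc (half_pos hpl)
  set S : Set (ℝ × ℝ) := {v | 0 ≤ v.2 ∧ (Φ v).im = 0 ∧ π * l ≤ (Φ v).re} with hS
  have hSclosed : IsClosed S :=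
    (isClosed_le continuous_const continuous_snd).inter
      ((isClosed_eq (Complex.continuous_im.comp hcont) continuous_const).inter
        (isClosed_le continuous_const (Complex.continuous_re.comp hcont)))
  have hSsub : S ⊆ Set.Icc (-ρ) ρ ×ˢ Set.Icc 0 ρ := by
    rintro v ⟨h1, -, h3⟩
    by_cases h : ρ ≤ |v.1| ∨ ρ ≤ v.2
    · have h4 : ‖Φ v‖ ≤ π * l / 2 := hρ v.1 v.2 h1 h
      have := (Complex.re_le_norm (Φ v)).trans h4
      linarith
    · push Not at h
      exact ⟨abs_le.1 h.1.le, h1, h.2.le⟩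
  have hScomp : IsCompact S :=
    (isCompact_Icc.prod isCompact_Icc).of_isClosed_subset hSclosed hSsub
  have hSne : S.Nonempty := ⟨(x, y), hy, by simp [hΦ, hxy], by simp [hΦ, hxy]⟩
  obtain ⟨v, ⟨hv0, hvim, hvre⟩, hmax⟩ :=
    hScomp.exists_isMaxOn hSne (Complex.continuous_re.comp hcont).continuousOn
  rcases hv0.eq_or_lt with hv | hv
  · have hΦv : Φ v = logPotential (deriv f) v.1 0 := by simp [hΦ, ← hv]
    rw [hΦv] at hvim hvre
    rw [logPotential_deriv_zero_im hf hc] at hvim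
    have hfz : f v.1 = 0 := by simpa [Real.pi_ne_zero] using hvim
    have h1 := hyp v.1 hfz
    rw [hilbertR_eq hf hc, one_div, inv_mul_lt_iff₀ Real.pi_pos] at h1
    linarith
  · set U : Set ℂ := {z : ℂ | 0 < z.im} with hU
    have hUo : IsOpen U := isOpen_lt continuous_const Complex.continuous_im
    have hUc : IsPreconnected U := (convex_halfSpace_im_gt 0).isPreconnected
    have hval : ∀ z ∈ U, cauchyTransform f z = Φ (z.re, z.im) := fun z hz => by
      conv_lhs => rw [← Complex.re_add_im z]
      exact cauchyTransform_eq_logPotential hf hc z.re hz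
    have hmem : ∀ a b : ℝ, 0 < b → (a : ℂ) + b * Complex.I ∈ U := fun a b hb => by
      simpa [hU] using hb
    have hvU := hmem v.1 v.2 hv
    have hvval : cauchyTransform f (v.1 + v.2 * Complex.I) = Φ v :=
      cauchyTransform_eq_logPotential hf hc v.1 hv
    have han : AnalyticOnNhd ℂ (cauchyTransform f) U :=
      (differentiableOn_cauchyTransform hf.continuous hc).analyticOnNhd hUo
    rcases han.is_constant_or_isOpen hUc with ⟨w, hw⟩ | hopen
    · have h1 : Φ v = w := hvval ▸ hw _ hvU
      have hb : 0 < max ρ 1 := by positivity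
      have h2 : logPotential (deriv f) 0 (max ρ 1) = w := by
        rw [← cauchyTransform_eq_logPotential hf hc 0 hb]
        exact hw _ (hmem 0 _ hb)
      have h3 := hρ 0 (max ρ 1) hb.le (Or.inr (le_max_left _ _))
      rw [h2, ← h1] at h3
      have := (Complex.re_le_norm (Φ v)).trans h3
      linarith
    · have hO : cauchyTransform f '' U ∈ 𝓝 (Φ v) :=
        (hopen U subset_rfl hUo).mem_nhds ⟨_, hvU, hvval⟩
      have ht : Tendsto (fun t : ℝ => Φ v + t) (𝓝[>] 0) (𝓝 (Φ v)) := by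
        have : Continuous fun t : ℝ => Φ v + t := by fun_prop
        simpa using (this.tendsto 0).mono_left (nhdsWithin_le_nhds (s := Set.Ioi 0))
      obtain ⟨t, ⟨z, hz, hzt⟩, ht0⟩ := ((ht.eventually hO).and
        (self_mem_nhdsWithin : Set.Ioi (0 : ℝ) ∈ 𝓝[>] 0)).exists
      have ht0' : 0 < t := ht0
      rw [hval z hz] at hzt
      have hzre : (Φ (z.re, z.im)).re = (Φ v).re + t := by simp [hzt]
      have hzS : (z.re, z.im) ∈ S :=
        ⟨le_of_lt hz, by simp [hzt, hvim], by rw [hzre]; linarith⟩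
      have h5 : (Φ (z.re, z.im)).re ≤ (Φ v).re := hmax hzS
      linarith

end OpenMapping

section DifferenceQuotient

variable {Q : ℝ → ℝ}

lemma dxp_zero (Q : ℝ → ℝ) : DXP Q 0 = deriv Q := by
  ext k
  simp [DXP]

lemma dxp_of_ne (Q : ℝ → ℝ) {X : ℝ} (hX : X ≠ 0) :
    DXP Q X = fun k => (Q (k + X / 2) - Q (k - X / 2)) / X := by
  ext k
  simp [DXP, hX]

lemma dxp_eq_integral (hQ : ContDiff ℝ 1 Q) (X k : ℝ) :
    DXP Q X k = ∫ s in (0 : ℝ)..1, deriv Q (k + (s - 1 / 2) * X) := by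
  rcases eq_or_ne X 0 with rfl | hX
  · simp [dxp_zero]
  · have hder : ∀ s ∈ Set.uIcc (0 : ℝ) 1, HasDerivAt (fun s => Q (k + (s - 1 / 2) * X) / X)
        (deriv Q (k + (s - 1 / 2) * X)) s := by
      intro s _
      have h1 : HasDerivAt (fun s : ℝ => k + (s - 1 / 2) * X) X s := by
        have h := (((hasDerivAt_id' s).sub_const (1 / 2)).mul_const X).const_add k
        rwa [one_mul] at h
      have h2 := ((hQ.differentiable one_ne_zero _).hasDerivAt.comp s h1).div_const X
      simpa [hX] using h2
    have hderiv_cont : Continuous fun s : ℝ => deriv Q (k + (s - 1 / 2) * X) :=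
      (hQ.continuous_deriv le_rfl).comp (by fun_prop)
    rw [intervalIntegral.integral_eq_sub_of_hasDerivAt hder (hderiv_cont.intervalIntegrable _ _),
      dxp_of_ne Q hX, ← sub_div]
    ring_nf

lemma continuous_dxp (hQ : ContDiff ℝ 1 Q) : Continuous (Function.uncurry (DXP Q)) := by
  have h : Function.uncurry (DXP Q)
      = fun v : ℝ × ℝ => ∫ s in (0 : ℝ)..1, deriv Q (v.2 + (s - 1 / 2) * v.1) := by
    ext v
    exact dxp_eq_integral hQ v.1 v.2
  rw [h]
  refine intervalIntegral.continuous_parametric_intervalIntegral_of_continuous' ?_ 0 1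
  exact (hQ.continuous_deriv le_rfl).comp (by fun_prop)

lemma dxp_eq_zero {R : ℝ} (hs : ∀ k, R < |k| → Q k = 0) {X k : ℝ} (hk : R + |X| < |k|) :
    DXP Q X k = 0 := by
  rcases eq_or_ne X 0 with rfl | hX
  · rw [dxp_zero]
    have : Q =ᶠ[𝓝 k] fun _ => 0 := by
      filter_upwards [(isOpen_lt continuous_const continuous_abs).mem_nhds
        (show R < |k| by simpa using hk)] with t ht using hs t ht
    rw [this.deriv_eq, deriv_const]
  · have habs : |X / 2| ≤ |X| := by
      rw [abs_div, abs_two]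
      have := abs_nonneg X
      linarith
    have h1 := abs_sub_abs_le_abs_sub k (-(X / 2))
    have h2 := abs_sub_abs_le_abs_sub k (X / 2)
    rw [abs_neg, sub_neg_eq_add] at h1
    simp only [dxp_of_ne Q hX]
    rw [hs _ (by linarith), hs _ (by linarith)]
    simp

lemma contDiff_one_deriv (hQ : ContDiff ℝ 2 Q) : ContDiff ℝ 1 (deriv Q) :=
  ContDiff.deriv' (n := 1) (by rwa [one_add_one_eq_two])

lemma hasDerivAt_dxp (hQ : ContDiff ℝ 2 Q) (X k : ℝ) :
    HasDerivAt (DXP Q X) (DXP (deriv Q) X k) k := by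
  rcases eq_or_ne X 0 with rfl | hX
  · rw [dxp_zero, dxp_zero]
    exact ((contDiff_one_deriv hQ).differentiable one_ne_zero k).hasDerivAt
  · rw [dxp_of_ne Q hX, dxp_of_ne _ hX]
    have h : ∀ t, HasDerivAt Q (deriv Q t) t := fun t =>
      (hQ.differentiable two_ne_zero t).hasDerivAt
    exact (((h _).comp_add_const k (X / 2)).sub ((h _).comp_sub_const k (X / 2))).div_const X

lemma deriv_dxp (hQ : ContDiff ℝ 2 Q) (X : ℝ) : deriv (DXP Q X) = DXP (deriv Q) X :=
  funext fun k => (hasDerivAt_dxp hQ X k).deriv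

lemma contDiff_dxp (hQ : ContDiff ℝ 2 Q) (X : ℝ) : ContDiff ℝ 1 (DXP Q X) := by
  rw [contDiff_one_iff_deriv, deriv_dxp hQ]
  exact ⟨fun k => (hasDerivAt_dxp hQ X k).differentiableAt,
    (continuous_dxp (contDiff_one_deriv hQ)).comp (continuous_const.prodMk continuous_id)⟩

lemma hasCompactSupport_dxp (hc : HasCompactSupport Q) (X : ℝ) : HasCompactSupport (DXP Q X) := by
  obtain ⟨R, hR⟩ := exists_forall_eq_zero_of_lt_abs hc
  exact HasCompactSupport.intro (isCompact_Icc (a := -(R + |X|)) (b := R + |X|)) fun k hk =>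
    dxp_eq_zero hR (not_le.1 fun h => hk (abs_le.1 h))

lemma cauchyTransform_dxp (hQ : Continuous Q) (hc : HasCompactSupport Q) {X : ℝ} (hX : X ≠ 0)
    {z : ℂ} (hz : z.im ≠ 0) :
    cauchyTransform (DXP Q X) z
      = (cauchyTransform Q (z + (X / 2 : ℝ)) - cauchyTransform Q (z - (X / 2 : ℝ))) / X := by
  have hshift : ∀ a : ℝ, (∫ k : ℝ, (Q (k + a) : ℂ) / (z - k)) = cauchyTransform Q (z + a) := by
    intro a
    rw [cauchyTransform, ← integral_add_right_eq_self (fun k : ℝ => (Q k : ℂ) / (z + a - k)) a]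
    simp
  have hshift_int : ∀ a : ℝ, Integrable fun k : ℝ => (Q (k + a) : ℂ) / (z - k) := fun a =>
    integrable_div_sub (hQ.comp (continuous_add_const a))
      (hc.comp_homeomorph (Homeomorph.addRight a)) hz
  have h1 := hshift (X / 2)
  have h2 := hshift (-(X / 2))
  rw [Complex.ofReal_neg, ← sub_eq_add_neg] at h2
  rw [← h1, ← h2, ← integral_sub (hshift_int _) (hshift_int _), ← integral_div]
  refine integral_congr_ae (Eventually.of_forall fun k => ?_)
  simp only [dxp_of_ne Q hX, ← sub_eq_add_neg]
  push_cast
  ring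

end DifferenceQuotient

section Stability

variable {P : ℝ → ℝ}

lemma cauchyTransform_conj (f : ℝ → ℝ) (z : ℂ) :
    cauchyTransform f (starRingEnd ℂ z) = starRingEnd ℂ (cauchyTransform f z) := by
  rw [cauchyTransform, cauchyTransform, ← integral_conj]
  simp

lemma htilde_zero (p q : ℝ) (P : ℝ → ℝ) (ω : ℂ) : htilde p q P 0 ω = 0 := by
  simp [htilde]

lemma htilde_eq_cauchyTransform {p q X : ℝ} (hp : p ≠ 0) (hX : X ≠ 0) (P : ℝ → ℝ) (ω : ℂ) :
    htilde p q P X ω = (q / (4 * π ^ 2 * p) : ℝ) *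
      cauchyTransform (DXP P X) (-Complex.I * ω / (4 * π ^ 2 * p * X : ℝ)) := by
  have hp' : (p : ℂ) ≠ 0 := by exact_mod_cast hp
  have hX' : (X : ℂ) ≠ 0 := by exact_mod_cast hX
  have hπ : (π : ℂ) ≠ 0 := by exact_mod_cast Real.pi_ne_zero
  rw [htilde, cauchyTransform, ← integral_const_mul, ← integral_const_mul]
  refine integral_congr_ae (Eventually.of_forall fun k => ?_)
  have hden : (ω - 4 * (π : ℂ) ^ 2 * Complex.I * p * k * X) =
      4 * π ^ 2 * p * X * Complex.I *
        (-Complex.I * ω / (4 * π ^ 2 * p * X : ℝ) - k) := by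
    push_cast
    field_simp
    linear_combination ω * Complex.I_sq
  simp only [hden, dxp_of_ne P hX]
  generalize -Complex.I * ω / (4 * π ^ 2 * p * X : ℝ) - k = w
  push_cast
  rcases eq_or_ne w 0 with rfl | hw
  · simp
  · field_simp

/-- The level `πl` is at a positive distance from all values of the Cauchy transforms. -/
lemma exists_le_norm_sub_cauchyTransform_dxp (hP : ContDiff ℝ 2 P) (hc : HasCompactSupport P)
    {l : ℝ} (hl : 0 < l) (hyp : ∀ X x, DXP P X x = 0 → hilbertR (DXP P X) x < l) :
    ∃ κ > 0, ∀ X, X ≠ 0 → ∀ z : ℂ, z.im ≠ 0 →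
      κ ≤ ‖((π * l : ℝ) : ℂ) - cauchyTransform (DXP P X) z‖ := by
  have hpl : 0 < π * l := by positivity
  have hP1 : ContDiff ℝ 1 P := hP.of_le one_le_two
  obtain ⟨R, hR⟩ := exists_forall_eq_zero_of_lt_abs hc
  obtain ⟨R', hR'⟩ := exists_forall_eq_zero_of_lt_abs hc.deriv
  obtain ⟨M, hM0, hM⟩ := exists_bound_logPotential_deriv hP1 hc
  have hMC : ∀ z : ℂ, 0 < z.im → ‖cauchyTransform P z‖ ≤ M := fun z hz => by
    rw [← Complex.re_add_im z, cauchyTransform_eq_logPotential hP1 hc z.re hz]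
    exact hM _ _ hz.le
  set A := 4 * M / (π * l) + 1 with hA
  have hA0 : 0 < A := by positivity
  obtain ⟨ρ, hρ⟩ := exists_norm_logPotential_le (continuous_dxp hP1)
    (fun X k hk => dxp_eq_zero hR hk) (contDiff_dxp hP) A (half_pos hpl)
  have hcont : Continuous fun v : ℝ × ℝ × ℝ =>
      ‖((π * l : ℝ) : ℂ) - logPotential (deriv (DXP P v.1)) v.2.1 v.2.2‖ := by
    simp only [deriv_dxp hP]
    exact (continuous_const.sub (continuous_logPotential (continuous_dxp (contDiff_one_deriv hP))
      fun X k hk => dxp_eq_zero hR' hk)).norm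
  obtain ⟨m, hm0, hm⟩ := ((isCompact_Icc (a := -A) (b := A)).prod
    ((isCompact_Icc (a := -ρ) (b := ρ)).prod
      (isCompact_Icc (a := (0 : ℝ)) (b := ρ)))).exists_forall_le' hcont.continuousOn (a := 0)
    fun v hv => norm_pos_iff.2 (sub_ne_zero.2 (logPotential_deriv_ne (contDiff_dxp hP v.1)
      (hasCompactSupport_dxp hc v.1) hl (hyp v.1) v.2.1 hv.2.2.1).symm)
  have hfar : ∀ w : ℂ, ‖w‖ ≤ π * l / 2 → π * l / 2 ≤ ‖((π * l : ℝ) : ℂ) - w‖ := by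
    intro w hw
    have h1 := norm_sub_norm_le ((π * l : ℝ) : ℂ) w
    rw [Complex.norm_real, Real.norm_eq_abs, abs_of_pos hpl] at h1
    linarith
  have hupper : ∀ X, X ≠ 0 → ∀ z : ℂ, 0 < z.im →
      min m (π * l / 2) ≤ ‖((π * l : ℝ) : ℂ) - cauchyTransform (DXP P X) z‖ := by
    intro X hX z hz
    rcases le_total |X| A with hXA | hXA
    · rw [← Complex.re_add_im z, cauchyTransform_eq_logPotential (contDiff_dxp hP X)
        (hasCompactSupport_dxp hc X) z.re hz]
      by_cases h : ρ ≤ |z.re| ∨ ρ ≤ z.im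
      · exact (min_le_right _ _).trans (hfar _ (hρ X hXA _ _ hz.le h))
      · push Not at h
        exact (min_le_left _ _).trans
          (hm (X, z.re, z.im) ⟨abs_le.1 hXA, abs_le.1 h.1.le, hz.le, h.2.le⟩)
    · refine (min_le_right _ _).trans (hfar _ ?_)
      rw [cauchyTransform_dxp hP1.continuous hc hX hz.ne', norm_div, Complex.norm_real,
        Real.norm_eq_abs, div_le_iff₀ (hA0.trans_le hXA)]
      have h1 := hMC (z + (X / 2 : ℝ)) (by simpa using hz)
      have h2 := hMC (z - (X / 2 : ℝ)) (by simpa using hz)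
      have h3 : π * l / 2 * A = 2 * M + π * l / 2 := by
        rw [hA]
        field_simp
        ring
      have h4 : π * l / 2 * A ≤ π * l / 2 * |X| := by gcongr
      have h5 := norm_sub_le (cauchyTransform P (z + (X / 2 : ℝ)))
        (cauchyTransform P (z - (X / 2 : ℝ)))
      linarith
  refine ⟨min m (π * l / 2), lt_min hm0 (half_pos hpl), fun X hX z hz => ?_⟩
  rcases hz.lt_or_gt with hz | hz
  · have h := hupper X hX (starRingEnd ℂ z) (by simpa using hz)
    rwa [cauchyTransform_conj, ← Complex.conj_ofReal, ← map_sub, Complex.norm_conj] at h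
  · exact hupper X hX z hz

/-- The Hilbert transform of `P'` vanishes at infinity, where also `P' = 0`; this forces the sign
of the threshold. -/
lemma nonneg_of_forall_hilbertR_lt (hP : ContDiff ℝ 2 P) (hc : HasCompactSupport P) {l : ℝ}
    (hyp : ∀ x, DXP P 0 x = 0 → hilbertR (DXP P 0) x < l) : 0 ≤ l := by
  by_contra! hl
  have hpl : 0 < π * -l := mul_pos Real.pi_pos (neg_pos.2 hl)
  have hd := contDiff_dxp hP 0
  have hdc := hasCompactSupport_dxp hc 0
  obtain ⟨R, hR⟩ := exists_forall_eq_zero_of_lt_abs hdc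
  obtain ⟨ρ, hρ⟩ := exists_norm_logPotential_deriv_le hd hdc hpl
  set t := max ρ (R + 1) with ht
  have h1 := hyp t (hR t (by
    have := le_max_right ρ (R + 1)
    have := le_abs_self t
    linarith))
  have h2 := hρ t 0 le_rfl (Or.inl ((le_max_left _ _).trans (le_abs_self t)))
  rw [hilbertR_eq hd hdc, one_div, inv_mul_lt_iff₀ Real.pi_pos] at h1
  have h3 := (abs_le.1 ((Complex.abs_re_le_norm _).trans h2)).1
  linarith

end Stability

/-- Sufficient condition for stability: if for every `X` and every real
zero `t*` of `D_X P` one has `H[D_X P](t*) < 4πp/q`, then `P` is stable, i.e. there is `κ > 0`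
with `|1 − h̃(X,ω)| ≥ κ` for all `X ∈ ℝ` and all `ω` with `Re ω > 0`. -/
theorem stmt_18 (p q : ℝ) (hp : p ≠ 0) (hq : q ≠ 0)
    (P : SchwartzMap ℝ ℝ) (hPc : HasCompactSupport ⇑P)
    (hyp : ∀ X ts : ℝ, DXP (⇑P) X ts = 0 → hilbertR (DXP (⇑P) X) ts < 4 * π * p / q) :
    ∃ κ > 0, ∀ (X : ℝ) (ω : ℂ), 0 < ω.re → κ ≤ ‖1 - htilde p q (⇑P) X ω‖ := by
  have hP : ContDiff ℝ 2 ⇑P := P.smooth 2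
  set l := 4 * π * p / q with hl
  have hl0 : 0 < l := lt_of_le_of_ne (nonneg_of_forall_hilbertR_lt hP hPc (hyp 0))
    (by rw [hl]; positivity : l ≠ 0).symm
  have hpl : 0 < π * l := by positivity
  obtain ⟨κ, hκ0, hκ⟩ := exists_le_norm_sub_cauchyTransform_dxp hP hPc hl0 hyp
  refine ⟨min 1 (κ / (π * l)), lt_min one_pos (by positivity), fun X ω hω => ?_⟩
  rcases eq_or_ne X 0 with rfl | hX
  · rw [htilde_zero]
    simp
  · have hc : q / (4 * π ^ 2 * p) = (π * l)⁻¹ := by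
      rw [hl]
      field_simp
    set z : ℂ := -Complex.I * ω / (4 * π ^ 2 * p * X : ℝ) with hz
    have hzim : z.im ≠ 0 := by
      rw [hz, Complex.div_ofReal_im]
      have : (-Complex.I * ω).im = -ω.re := by simp
      rw [this]
      exact div_ne_zero (neg_ne_zero.2 hω.ne') (by positivity)
    refine (min_le_right _ _).trans ?_
    have hpl' : ((π * l : ℝ) : ℂ) ≠ 0 := by exact_mod_cast hpl.ne'
    have heq : 1 - htilde p q P X ω
        = (((π * l : ℝ) : ℂ) - cauchyTransform (DXP P X) z) / ((π * l : ℝ) : ℂ) := by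
      rw [htilde_eq_cauchyTransform hp hX, hc, ← hz, sub_div, div_self hpl', Complex.ofReal_inv,
        inv_mul_eq_div]
    rw [heq, norm_div, Complex.norm_real, Real.norm_eq_abs, abs_of_pos hpl]
    gcongr
    exact hκ X hX z hzim

end
end
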